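/- arXiv:2511.12649 — 4 statements merged into one kernel-verified Lean document; each statement's English description precedes it below -/
import Mathlib

section
/- Let p, q be integers with 2 ≤ p < q and let γ ∈ (0, γ_{p,q}), with a, A the two roots of g(u) = 1 − u^{p−1} + γ u^{q−1} in (0,∞), a < A. Let N ≥ 1 and let ũ ∈ ℝ^N have every entry in {a, −a, A, −A}. Then there exist ε₀ > 0 and C₀ > 0 such that for every ε ∈ (0, ε₀) there exists a real-valued u ∈ ℓ²(ℤ) solving ε(u_{n+1} − 2u_n + u_{n−1}) − u_n + |u_n|^{p−1}u_n − γ|u_n|^{q−1}u_n = 0 for all n ∈ ℤ with ‖u − u⁽⁰⁾‖_{ℓ²(ℤ)} ≤ C₀ε, and additionally: u_n ≠ 0 for all n ∈ ℤ; the sign of u_n equals the sign of ũ_n for 1 ≤ n ≤ N; the sign of u_n equals the sign of ũ_1 for all n ≤ 0; the sign of u_n equals the sign of ũ_N for all n ≥ N + 1. In particular, the number of indices n ∈ ℤ with u_n u_{n+1} < 0 equals the number of indices n ∈ {1, …, N−1} with ũ_n ũ_{n+1} < 0. -/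
/-- The critical parameter `γ_{p,q} = ((p−1)/(q−1))·((q−p)/(q−1))^{(q−p)/(p−1)}`. -/
noncomputable def gammaCrit (p q : ℕ) : ℝ :=
  (((p : ℝ) - 1) / ((q : ℝ) - 1)) *
    (((q : ℝ) - (p : ℝ)) / ((q : ℝ) - 1)) ^ (((q : ℝ) - (p : ℝ)) / ((p : ℝ) - 1))

/-- Extension of a vector `Fin N → ℝ` to `ℕ` by zero. -/
def extFin (N : ℕ) (ut : Fin N → ℝ) : ℕ → ℝ :=
  fun i => if h : i < N then ut ⟨i, h⟩ else 0

/-- The limiting sequence `u⁽⁰⁾ : ℤ → ℝ`, equal to `ũ_n` for `1 ≤ n ≤ N` and `0` otherwise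
(1-indexed convention). -/
def limitSeq (N : ℕ) (ut : Fin N → ℝ) : ℤ → ℝ :=
  fun n => if 1 ≤ n ∧ n ≤ (N : ℤ) then extFin N ut (n - 1).toNat else 0

theorem nondeg_aux (m n : ℕ) (hm : 1 ≤ m) (hmn : m < n) (γ x y : ℝ) (hx : 0 < x) (hy : 0 < y)
    (hxy : x ≠ y) (h1 : 1 - x ^ m + γ * x ^ n = 0) (h2 : 1 - y ^ m + γ * y ^ n = 0) :
    1 - ((m : ℝ) + 1) * x ^ m + γ * (((n : ℝ) + 1) * x ^ n) ≠ 0 := by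
  intro h
  obtain ⟨t, ht⟩ : ∃ t, t = y / x := ⟨_, rfl⟩
  have ht0 : 0 < t := by rw [ht]; positivity
  have hy' : y = x * t := by rw [ht]; field_simp
  have ht1 : t ≠ 1 := by
    rintro rfl
    exact hxy (by rw [hy', mul_one])
  have hm0 : (0 : ℝ) < m := by exact_mod_cast hm
  have hmn' : (m : ℝ) < n := by exact_mod_cast hmn
  have hne : t ^ m ≠ 1 := by
    intro h'
    exact ht1 ((pow_eq_one_iff_of_nonneg ht0.le (by omega)).1 h')
  have hs0 : 0 < t ^ m := by positivity
  have key := one_add_mul_self_lt_rpow_one_add (s := t ^ m - 1) (by linarith)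
    (sub_ne_zero.2 hne) (p := (n : ℝ) / m) (by rw [lt_div_iff₀ hm0]; linarith)
  have e1 : (1 + (t ^ m - 1)) ^ ((n : ℝ) / m) = t ^ n := by
    rw [add_sub_cancel, ← Real.rpow_natCast t m, ← Real.rpow_mul ht0.le,
      mul_div_cancel₀ _ hm0.ne', Real.rpow_natCast]
  rw [e1] at key
  have key2 : (m : ℝ) + n * (t ^ m - 1) < m * t ^ n := by
    have := mul_lt_mul_of_pos_left key hm0
    have e2 : (m : ℝ) * (1 + n / m * (t ^ m - 1)) = m + n * (t ^ m - 1) := by field_simp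
    linarith
  rw [hy', mul_pow, mul_pow] at h2
  have hS : ((n : ℝ) - m) * x ^ m = n := by linear_combination h - (n + 1) * h1
  have hT : ((n : ℝ) - m) * (γ * x ^ n) = m := by linear_combination h - (m + 1) * h1
  have : ((n : ℝ) - m) - n * t ^ m + m * t ^ n = 0 := by
    linear_combination ((n : ℝ) - m) * h2 + t ^ m * hS - t ^ n * hT
  linarith

/-- The on-site nonlinearity. -/
noncomputable def onsite (m n : ℕ) (γ x : ℝ) : ℝ := x - |x| ^ m * x + γ * (|x| ^ n * x)

theorem onsite_neg (m n : ℕ) (γ x : ℝ) : onsite m n γ (-x) = - onsite m n γ x := by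
  unfold onsite; rw [abs_neg]; ring

/-- good data at a zero of the nonlinearity -/
def GoodAt (f : ℝ → ℝ) (v θ δ : ℝ) : Prop :=
  ∀ x y : ℝ, |x - v| ≤ δ → |y - v| ≤ δ → |(x - θ * f x) - (y - θ * f y)| ≤ 3 / 4 * |x - y|

theorem GoodAt.mono {f : ℝ → ℝ} {v θ δ δ' : ℝ} (h : GoodAt f v θ δ) (hd : δ' ≤ δ) :
    GoodAt f v θ δ' := fun x y hx hy => h x y (hx.trans hd) (hy.trans hd)

theorem good_pos (m n : ℕ) (hm : 1 ≤ m) (hmn : m < n) (γ x y : ℝ) (hx : 0 < x) (hy : 0 < y)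
    (hxy : x ≠ y) (h1 : 1 - x ^ m + γ * x ^ n = 0) (h2 : 1 - y ^ m + γ * y ^ n = 0) :
    ∃ θ δ, θ ≠ 0 ∧ 0 < δ ∧ GoodAt (onsite m n γ) x θ δ := by
  have hd := nondeg_aux m n hm hmn γ x y hx hy hxy h1 h2
  set d := 1 - ((m : ℝ) + 1) * x ^ m + γ * (((n : ℝ) + 1) * x ^ n) with hd'
  have hder : HasStrictDerivAt (onsite m n γ) d x := by
    have A1 : HasStrictDerivAt (fun x : ℝ => x - x ^ (m + 1) + γ * x ^ (n + 1)) d x := by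
      have := ((hasStrictDerivAt_id x).sub (hasStrictDerivAt_pow (m + 1) x)).add
        ((hasStrictDerivAt_pow (n + 1) x).const_mul γ)
      have hde : d = 1 - ↑(m + 1) * x ^ (m + 1 - 1) + γ * (↑(n + 1) * x ^ (n + 1 - 1)) := by
        simp [hd']
      rw [hde]
      exact this
    refine A1.congr_of_eventuallyEq ?_
    filter_upwards [lt_mem_nhds hx] with z hz
    unfold onsite
    rw [abs_of_pos hz]; ring
  have := hder.isLittleO.def (c := 3 / 4 * |d|) (by positivity)
  rw [Metric.eventually_nhds_iff] at this
  obtain ⟨δ, hδ, H⟩ := this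
  refine ⟨d⁻¹, δ / 2, inv_ne_zero hd, by positivity, ?_⟩
  intro u v hu hv
  have H' := @H (u, v) (by
    rw [Prod.dist_eq, max_lt_iff]
    constructor
    · rw [Real.dist_eq]; simp only; linarith
    · rw [Real.dist_eq]; simp only; linarith)
  simp only [ContinuousLinearMap.toSpanSingleton_apply, Real.norm_eq_abs, smul_eq_mul] at H'
  have e : (u - d⁻¹ * onsite m n γ u) - (v - d⁻¹ * onsite m n γ v)
      = - (d⁻¹ * (onsite m n γ u - onsite m n γ v - (u - v) * d)) := by
    field_simp; ring
  rw [e, abs_neg, abs_mul, abs_inv, inv_mul_le_iff₀ (abs_pos.2 hd)]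
  linarith

theorem good_neg (m n : ℕ) (γ v θ δ : ℝ) (h : GoodAt (onsite m n γ) v θ δ) :
    GoodAt (onsite m n γ) (-v) θ δ := by
  intro x y hx hy
  have := h (-x) (-y) (by rw [← abs_neg]; convert hx using 2; ring)
    (by rw [← abs_neg]; convert hy using 2; ring)
  rw [onsite_neg, onsite_neg] at this
  rw [← abs_neg, ← abs_neg (x - y)]
  convert this using 2
  · ring
  · congr 1; ring

theorem pow_lip (m : ℕ) (hm : 1 ≤ m) (r x y : ℝ) (hr : r ≤ 1) (hx : |x| ≤ r) (hy : |y| ≤ r) :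
    abs (|x| ^ m * x - |y| ^ m * y) ≤ (m + 1) * r * |x - y| := by
  have hr0 : 0 ≤ r := (abs_nonneg _).trans hx
  have e : |x| ^ m * x - |y| ^ m * y = |x| ^ m * (x - y) + y * (|x| ^ m - |y| ^ m) := by ring
  have b1 : abs (|x| ^ m) ≤ r := by
    rw [abs_of_nonneg (by positivity)]
    calc |x| ^ m ≤ |x| ^ 1 := pow_le_pow_of_le_one (abs_nonneg _) (hx.trans hr) hm
      _ ≤ r := by simpa using hx
  have b2 : abs (|x| ^ m - |y| ^ m) ≤ |x - y| * m := by
    have := abs_pow_sub_pow_le (|x|) (|y|) m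
    have h1 : max (abs |x|) (abs |y|) ^ (m - 1) ≤ 1 := by
      apply pow_le_one₀
      · exact le_max_of_le_left (abs_nonneg _)
      · simp only [abs_abs]; exact max_le (hx.trans hr) (hy.trans hr)
    calc _ ≤ _ := this
      _ ≤ |x - y| * m * 1 := by
        refine mul_le_mul (mul_le_mul_of_nonneg_right (abs_abs_sub_abs_le x y) (by positivity))
          h1 (by positivity) (by positivity)
      _ = _ := mul_one _
  rw [e]
  calc _ ≤ _ := abs_add_le _ _
    _ = abs (|x| ^ m) * |x - y| + |y| * abs (|x| ^ m - |y| ^ m) := by rw [abs_mul, abs_mul]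
    _ ≤ r * |x - y| + r * (|x - y| * m) := by gcongr
    _ = _ := by ring

theorem good_zero (m n : ℕ) (hm : 1 ≤ m) (hn : 1 ≤ n) (γ : ℝ) (hγ : 0 < γ) :
    ∃ δ, 0 < δ ∧ δ ≤ 1 ∧ γ * δ ≤ 1 / 2 ∧ GoodAt (onsite m n γ) 0 (1 / 2) δ := by
  refine ⟨1 / (2 * ((m + 1) + γ * (n + 1))), by positivity, ?_, ?_, ?_⟩
  · rw [div_le_one (by positivity)]
    have : 0 < γ * (n + 1) := by positivity
    have : (0 : ℝ) ≤ m := by positivity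
    linarith
  · rw [mul_one_div, div_le_iff₀ (by positivity)]
    have : 0 ≤ γ * n := by positivity
    have : (0 : ℝ) ≤ m := by positivity
    linarith
  · intro x y hx hy
    rw [sub_zero] at hx hy
    set r := 1 / (2 * ((m + 1) + γ * (n + 1))) with hr
    have hr1 : r ≤ 1 := by
      rw [hr, div_le_one (by positivity)]
      have : 0 < γ * (n + 1) := by positivity
      have : (0 : ℝ) ≤ m := by positivity
      linarith
    have hrr : ((m + 1) + γ * (n + 1)) * r = 1 / 2 := by
      rw [hr]; field_simp
    have h1 := pow_lip m hm r x y hr1 hx hy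
    have h2 := pow_lip n hn r x y hr1 hx hy
    have e : (x - 1 / 2 * onsite m n γ x) - (y - 1 / 2 * onsite m n γ y)
      = 1 / 2 * (x - y) + (1 / 2 * (|x| ^ m * x - |y| ^ m * y)
        + 1 / 2 * γ * -(|x| ^ n * x - |y| ^ n * y)) := by unfold onsite; ring
    rw [e]
    calc _ ≤ |1 / 2 * (x - y)| + (|1 / 2 * (|x| ^ m * x - |y| ^ m * y)| +
          |1 / 2 * γ * -(|x| ^ n * x - |y| ^ n * y)|) :=
          (abs_add_le _ _).trans (by gcongr; exact abs_add_le _ _)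
      _ = 1 / 2 * |x - y| + (1 / 2 * abs (|x| ^ m * x - |y| ^ m * y) +
          1 / 2 * γ * abs (|x| ^ n * x - |y| ^ n * y)) := by
          simp only [abs_mul, abs_neg]
          rw [abs_of_pos hγ, abs_of_pos (by norm_num : (0 : ℝ) < 1 / 2)]
      _ ≤ 1 / 2 * |x - y| + (1 / 2 * ((m + 1) * r * |x - y|) +
          1 / 2 * γ * ((n + 1) * r * |x - y|)) := by gcongr
      _ = 1 / 2 * |x - y| + 1 / 2 * (((m + 1) + γ * (n + 1)) * r) * |x - y| := by ring
      _ = _ := by rw [hrr]; ring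

theorem fixed_pt (S : Set (ℤ → ℝ)) (hS : IsClosed S) (T : (ℤ → ℝ) → (ℤ → ℝ))
    (hT : Continuous T) (hmap : ∀ u ∈ S, T u ∈ S) (u₀ : ℤ → ℝ) (h₀ : u₀ ∈ S) (C : ℝ)
    (hC : ∀ n, |u₀ n - T u₀ n| ≤ C)
    (hcon : ∀ u ∈ S, ∀ v ∈ S, ∀ D : ℝ, (∀ n, |u n - v n| ≤ D) →
      ∀ n, |T u n - T v n| ≤ 7 / 8 * D) : ∃ u ∈ S, T u = u := by
  have hit : ∀ k, T^[k] u₀ ∈ S := by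
    intro k
    induction k with
    | zero => exact h₀
    | succ k ih => rw [Function.iterate_succ_apply']; exact hmap _ ih
  have hd : ∀ k n, |T^[k] u₀ n - T^[k + 1] u₀ n| ≤ C * (7 / 8) ^ k := by
    intro k
    induction k with
    | zero => simpa using hC
    | succ k ih =>
      intro n
      have := hcon _ (hit k) _ (hit (k + 1)) _ ih n
      rw [Function.iterate_succ_apply' T k, Function.iterate_succ_apply' T (k + 1)]
      calc _ ≤ _ := this
        _ = _ := by ring
  have hlim : ∀ n, ∃ x, Filter.Tendsto (fun k => T^[k] u₀ n) Filter.atTop (nhds x) := by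
    intro n
    exact cauchySeq_tendsto_of_complete
      (cauchySeq_of_le_geometric (7 / 8) C (by norm_num) (fun k => by
        rw [Real.dist_eq]; exact hd k n))
  choose u hu using hlim
  have hu' : Filter.Tendsto (fun k => T^[k] u₀) Filter.atTop (nhds u) := tendsto_pi_nhds.2 hu
  exact ⟨u, hS.mem_of_tendsto hu' (Filter.Eventually.of_forall hit),
    isFixedPt_of_tendsto_iterate hu' hT.continuousAt⟩

theorem lattice (m k : ℕ) (hk : 1 ≤ k) (γ : ℝ) (hγ : 0 < γ) (N : ℕ) (hN : 1 ≤ N)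
    (u0 e θ : ℤ → ℝ) (Θ δ B a : ℝ) (hΘ : 0 < Θ) (hB : 0 ≤ B) (ha : 0 < a) (hδ : 0 < δ)
    (hδ1 : δ ≤ 1) (hδγ : γ * δ ≤ 1 / 2) (hδa : δ ≤ a / 2)
    (hθ0 : ∀ n, θ n ≠ 0) (hθ : ∀ n, |θ n| ≤ Θ)
    (hgood : ∀ n, GoodAt (onsite m k γ) (u0 n) (θ n) δ)
    (hf0 : ∀ n, onsite m k γ (u0 n) = 0)
    (he : ∀ n, a ≤ |e n|)
    (hcore : ∀ n : ℤ, 1 ≤ n → n ≤ N → u0 n = e n)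
    (htail : ∀ n : ℤ, ¬ (1 ≤ n ∧ n ≤ N) →
      u0 n = 0 ∧ θ n = 1 / 2 ∧ e (n + 1) = e n ∧ e (n - 1) = e n)
    (hu0 : ∀ n : ℤ, |u0 n| ≤ B * (1 / 2) ^ n.natAbs) :
    ∃ ε₀ > (0 : ℝ), ∃ K > (0 : ℝ), ∀ ε : ℝ, 0 < ε → ε < ε₀ → ∃ u : ℤ → ℝ,
      (∀ n, ε * (u (n + 1) - 2 * u n + u (n - 1)) = onsite m k γ (u n)) ∧
      (∀ n, |u n - u0 n| ≤ K * ε * (1 / 2) ^ n.natAbs) ∧ (∀ n, 0 < u n * e n) := by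
  obtain ⟨K, hKdef⟩ : ∃ K, K = 24 * Θ * (B + 1) := ⟨_, rfl⟩
  have hK : 0 < K := by rw [hKdef]; positivity
  refine ⟨min (δ / K) (min (1 / (32 * Θ)) (1 / 4)), by positivity, K, hK, ?_⟩
  intro ε hε hε'
  rw [lt_min_iff, lt_min_iff, lt_div_iff₀ hK, lt_div_iff₀ (by positivity)] at hε'
  obtain ⟨hε1, hε2, hε3⟩ := hε'
  set w : ℤ → ℝ := fun n => (1 / 2) ^ n.natAbs with hw
  have hw0 : ∀ n, 0 < w n := fun n => by simp only [hw]; positivity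
  have hw1 : ∀ n, w n ≤ 1 := fun n => pow_le_one₀ (by norm_num) (by norm_num)
  have hwn : ∀ n n' : ℤ, n.natAbs ≤ n'.natAbs + 1 → w n' ≤ 2 * w n := by
    intro n n' h
    have : ((1 : ℝ) / 2) ^ (n'.natAbs + 1) ≤ (1 / 2) ^ n.natAbs :=
      pow_le_pow_of_le_one (by norm_num) (by norm_num) h
    rw [pow_succ] at this
    simp only [hw]; linarith
  have hwp : ∀ n, w (n + 1) ≤ 2 * w n := fun n => hwn _ _ (by omega)
  have hwm : ∀ n, w (n - 1) ≤ 2 * w n := fun n => hwn _ _ (by omega)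
  set S : Set (ℤ → ℝ) := {u | (∀ n, |u n - u0 n| ≤ K * ε * w n) ∧ ∀ n, 0 ≤ u n * e n} with hS
  set T : (ℤ → ℝ) → (ℤ → ℝ) := fun u n =>
    u n - θ n * (onsite m k γ (u n) - ε * (u (n + 1) - 2 * u n + u (n - 1))) with hT
  have hfc : Continuous (onsite m k γ) := by unfold onsite; fun_prop
  have hTc : Continuous T := by
    refine continuous_pi fun n => ?_
    simp only [hT]
    fun_prop
  have hScl : IsClosed S := by
    have : S = (⋂ n, {u : ℤ → ℝ | |u n - u0 n| ≤ K * ε * w n}) ∩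
        ⋂ n, {u : ℤ → ℝ | 0 ≤ u n * e n} := by
      ext u; simp [hS]
    rw [this]
    refine (isClosed_iInter fun n => ?_).inter (isClosed_iInter fun n => ?_)
    · exact isClosed_le (by fun_prop) (by fun_prop)
    · exact isClosed_le (by fun_prop) (by fun_prop)
  have hSδ : ∀ u ∈ S, ∀ n, |u n - u0 n| ≤ δ := by
    intro u hu n
    calc _ ≤ _ := hu.1 n
      _ ≤ K * ε * 1 := by gcongr; exact hw1 n
      _ ≤ δ := by linarith
  have hSb : ∀ u ∈ S, ∀ n, |u n| ≤ (B + 1) * w n := by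
    intro u hu n
    have h1 := hu.1 n
    have h2 : |u0 n| ≤ B * w n := hu0 n
    have h3 : K * ε * w n ≤ 1 * w n := by
      have := (hw0 n).le
      gcongr; linarith
    have : |u n| ≤ |u n - u0 n| + |u0 n| := by
      simpa using abs_add_le (u n - u0 n) (u0 n)
    linarith
  have h0S : u0 ∈ S := by
    refine ⟨fun n => ?_, fun n => ?_⟩
    · have := hw0 n
      simp only [sub_self, abs_zero]; positivity
    · by_cases h : 1 ≤ n ∧ n ≤ N
      · rw [hcore n h.1 h.2]; exact mul_self_nonneg _
      · rw [(htail n h).1]; simp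
  have hpos : ∀ u : ℤ → ℝ, (∀ n, |u n - u0 n| ≤ δ) → ∀ n : ℤ, 1 ≤ n → n ≤ N →
      0 < u n * e n := by
    intro u hu n h1 h2
    have h3 := hu n
    rw [hcore n h1 h2] at h3
    have h4 := he n
    have h5 : |(u n - e n) * e n| ≤ δ * |e n| := by rw [abs_mul]; gcongr
    have h6 := neg_abs_le ((u n - e n) * e n)
    have h7 : |e n| * |e n| = e n * e n := abs_mul_abs_self _
    have h8 : 0 < |e n| * (|e n| - δ) := mul_pos (by linarith) (by linarith)
    nlinarith
  have hmapb : ∀ u ∈ S, ∀ n, |T u n - u0 n| ≤ K * ε * w n := by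
    intro u hu n
    have e1 : T u n - u0 n = ((u n - θ n * onsite m k γ (u n)) -
        (u0 n - θ n * onsite m k γ (u0 n))) +
        θ n * (ε * (u (n + 1) - 2 * u n + u (n - 1))) := by
      simp only [hT, hf0]; ring
    have h1 := hgood n (u n) (u0 n) (hSδ u hu n) (by simpa using hδ.le)
    have h2 : |u (n + 1) - 2 * u n + u (n - 1)| ≤ 6 * (B + 1) * w n := by
      have b1 := hSb u hu n
      have b2 := (hSb u hu (n + 1)).trans
        (mul_le_mul_of_nonneg_left (hwp n) (by linarith))
      have b3 := (hSb u hu (n - 1)).trans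
        (mul_le_mul_of_nonneg_left (hwm n) (by linarith))
      rw [abs_le] at *
      constructor <;> linarith
    have h3 : |θ n * (ε * (u (n + 1) - 2 * u n + u (n - 1)))| ≤
        Θ * (ε * (6 * (B + 1) * w n)) := by
      rw [abs_mul, abs_mul, abs_of_pos hε]
      have := hθ n
      gcongr
    have h4 := hu.1 n
    rw [e1]
    calc _ ≤ _ := abs_add_le _ _
      _ ≤ 3 / 4 * (K * ε * w n) + Θ * (ε * (6 * (B + 1) * w n)) := by linarith
      _ = _ := by rw [hKdef]; ring
  have hmap : ∀ u ∈ S, T u ∈ S := by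
    intro u hu
    refine ⟨hmapb u hu, fun n => ?_⟩
    by_cases h : 1 ≤ n ∧ n ≤ N
    · refine (hpos (T u) (fun n => ?_) n h.1 h.2).le
      calc _ ≤ _ := hmapb u hu n
        _ ≤ K * ε * 1 := by gcongr; exact hw1 n
        _ ≤ δ := by linarith
    · obtain ⟨t1, t2, t3, t4⟩ := htail n h
      have p1 := hu.2 n
      have p2 := hu.2 (n + 1)
      have p3 := hu.2 (n - 1)
      rw [t3] at p2
      rw [t4] at p3
      have hx := hSδ u hu n
      rw [t1, sub_zero] at hx
      have hfac : 0 ≤ 1 - ε - 1 / 2 * (1 - |u n| ^ m + γ * |u n| ^ k) := by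
        have q1 : |u n| ^ k ≤ δ := by
          calc |u n| ^ k ≤ |u n| ^ 1 :=
                pow_le_pow_of_le_one (abs_nonneg _) (hx.trans hδ1) hk
            _ ≤ δ := by simpa using hx
        have q2 : γ * |u n| ^ k ≤ γ * δ := by gcongr
        have q3 : 0 ≤ |u n| ^ m := by positivity
        linarith
      have : T u n * e n = (1 - ε - 1 / 2 * (1 - |u n| ^ m + γ * |u n| ^ k)) * (u n * e n)
          + ε / 2 * (u (n + 1) * e n + u (n - 1) * e n) := by
        simp only [hT, t2, onsite]; ring
      rw [this]
      positivity
  have hcon : ∀ u ∈ S, ∀ v ∈ S, ∀ D : ℝ, (∀ n, |u n - v n| ≤ D) →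
      ∀ n, |T u n - T v n| ≤ 7 / 8 * D := by
    intro u hu v hv D hD n
    have hD0 : 0 ≤ D := (abs_nonneg _).trans (hD 0)
    have e1 : T u n - T v n = ((u n - θ n * onsite m k γ (u n)) -
        (v n - θ n * onsite m k γ (v n))) +
        θ n * (ε * ((u (n + 1) - v (n + 1)) - 2 * (u n - v n) + (u (n - 1) - v (n - 1)))) := by
      simp only [hT]; ring
    have h1 := hgood n (u n) (v n) (hSδ u hu n) (hSδ v hv n)
    have h2 : |(u (n + 1) - v (n + 1)) - 2 * (u n - v n) + (u (n - 1) - v (n - 1))| ≤ 4 * D := by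
      have b1 := hD n
      have b2 := hD (n + 1)
      have b3 := hD (n - 1)
      rw [abs_le] at *
      constructor <;> linarith
    have h3 : |θ n * (ε * ((u (n + 1) - v (n + 1)) - 2 * (u n - v n)
        + (u (n - 1) - v (n - 1))))| ≤ Θ * (ε * (4 * D)) := by
      rw [abs_mul, abs_mul, abs_of_pos hε]
      have := hθ n
      gcongr
    have h4 := hD n
    have h5 : ε * (32 * Θ) * D ≤ 1 * D := by gcongr
    rw [e1]
    calc _ ≤ _ := abs_add_le _ _
      _ ≤ 3 / 4 * D + Θ * (ε * (4 * D)) := by linarith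
      _ ≤ _ := by linarith
  obtain ⟨u, huS, hfix⟩ := fixed_pt S hScl T hTc hmap u0 h0S (K * ε) (fun n => by
    rw [abs_sub_comm]
    calc _ ≤ _ := hmapb u0 h0S n
      _ ≤ K * ε * 1 := by gcongr; exact hw1 n
      _ = _ := mul_one _) hcon
  have heq : ∀ n, ε * (u (n + 1) - 2 * u n + u (n - 1)) = onsite m k γ (u n) := by
    intro n
    have h1 : T u n = u n := by rw [hfix]
    simp only [hT] at h1
    have h2 : θ n * (onsite m k γ (u n) - ε * (u (n + 1) - 2 * u n + u (n - 1))) = 0 := by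
      linarith
    have h3 := (mul_eq_zero.1 h2).resolve_left (hθ0 n)
    linarith
  refine ⟨u, heq, huS.1, ?_⟩
  have he0 : ∀ n, e n ≠ 0 := fun n h => by
    have := he n
    rw [h, abs_zero] at this; linarith
  have hcp := hpos u (hSδ u huS)
  have hz : ∀ n : ℤ, ¬ (1 ≤ n ∧ n ≤ N) → u n = 0 → u (n + 1) = 0 ∧ u (n - 1) = 0 := by
    intro n hn h0
    obtain ⟨t1, t2, t3, t4⟩ := htail n hn
    have p2 := huS.2 (n + 1)
    have p3 := huS.2 (n - 1)
    rw [t3] at p2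
    rw [t4] at p3
    have h1 := heq n
    rw [h0] at h1
    simp only [onsite, mul_zero, sub_zero, add_zero] at h1
    have h2 := (mul_eq_zero.1 h1).resolve_left hε.ne'
    have h3 : u (n + 1) * e n + u (n - 1) * e n = 0 := by rw [← add_mul, h2, zero_mul]
    exact ⟨(mul_eq_zero.1 (by linarith : u (n + 1) * e n = 0)).resolve_right (he0 n),
      (mul_eq_zero.1 (by linarith : u (n - 1) * e n = 0)).resolve_right (he0 n)⟩
  have hR : ∀ j : ℕ, u (N + j) ≠ 0 := by
    intro j
    induction j with
    | zero =>
      intro h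
      have := hcp N (by exact_mod_cast hN) le_rfl
      simp at h
      rw [h] at this; simp at this
    | succ j ih =>
      intro h
      have := (hz _ (by push_cast; omega) h).2
      apply ih
      convert this using 2
      push_cast; ring
  have hL : ∀ j : ℕ, u (1 - j) ≠ 0 := by
    intro j
    induction j with
    | zero =>
      intro h
      have := hcp 1 le_rfl (by exact_mod_cast hN)
      simp at h
      rw [h] at this; simp at this
    | succ j ih =>
      intro h
      have := (hz _ (by push_cast; omega) h).1
      apply ih
      convert this using 2
      push_cast; ring
  intro n
  refine lt_of_le_of_ne (huS.2 n) (Ne.symm (mul_ne_zero ?_ (he0 n)))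
  rcases le_or_gt n 1 with h | h
  · have := hL (1 - n).toNat
    convert this using 2
    omega
  rcases le_or_gt (N : ℤ) n with h' | h'
  · have := hR (n - N).toNat
    convert this using 2
    omega
  · intro h0
    have := hcp n (by omega) (by omega)
    rw [h0] at this; simp at this

/-- Existence of intrinsic localized modes near the anticontinuum limit, with
preservation of signs: the solution `u` is nowhere zero, matches the signs of the code
`ũ` on `1 ≤ n ≤ N`, the sign of `ũ_1` for `n ≤ 0`, the sign of `ũ_N` for `n ≥ N+1`;
in particular the number of sign alternations of `u` equals that of `ũ`. -/
theorem exists_ILM_near_ACL_sign (p q : ℕ) (hp : 2 ≤ p) (hpq : p < q)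
    (γ : ℝ) (hγ0 : 0 < γ) (hγ : γ < gammaCrit p q)
    (a A : ℝ) (ha : 0 < a) (haA : a < A)
    (hroota : 1 - a ^ (p - 1) + γ * a ^ (q - 1) = 0)
    (hrootA : 1 - A ^ (p - 1) + γ * A ^ (q - 1) = 0)
    (N : ℕ) (hN : 1 ≤ N) (ut : Fin N → ℝ)
    (hut : ∀ n, ut n = a ∨ ut n = -a ∨ ut n = A ∨ ut n = -A) :
    ∃ ε₀ > (0 : ℝ), ∃ C₀ > (0 : ℝ), ∀ ε : ℝ, 0 < ε → ε < ε₀ →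
      ∃ u : ℤ → ℝ,
        (∀ n : ℤ, ε * (u (n + 1) - 2 * u n + u (n - 1)) - u n
          + |u n| ^ (p - 1) * u n - γ * |u n| ^ (q - 1) * u n = 0) ∧
        Summable (fun n : ℤ => (u n) ^ 2) ∧
        Summable (fun n : ℤ => (u n - limitSeq N ut n) ^ 2) ∧
        Real.sqrt (∑' n : ℤ, (u n - limitSeq N ut n) ^ 2) ≤ C₀ * ε ∧
        (∀ n : ℤ, u n ≠ 0) ∧
        (∀ n : ℤ, 1 ≤ n → n ≤ (N : ℤ) →
          Real.sign (u n) = Real.sign (extFin N ut (n - 1).toNat)) ∧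
        (∀ n : ℤ, n ≤ 0 → Real.sign (u n) = Real.sign (extFin N ut 0)) ∧
        (∀ n : ℤ, (N : ℤ) + 1 ≤ n → Real.sign (u n) = Real.sign (extFin N ut (N - 1))) ∧
        Nat.card {n : ℤ | u n * u (n + 1) < 0}
          = ((Finset.range (N - 1)).filter
              (fun i => extFin N ut i * extFin N ut (i + 1) < 0)).card := by
  set m := p - 1 with hmdef
  set k := q - 1 with hkdef
  have hm : 1 ≤ m := by omega
  have hmk : m < k := by omega
  have hk : 1 ≤ k := by omega
  have hA : 0 < A := ha.trans haA
  obtain ⟨θa, δa, hθa, hδa, ga⟩ := good_pos m k hm hmk γ a A ha hA haA.ne hroota hrootA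
  obtain ⟨θA, δA, hθA, hδA, gA⟩ := good_pos m k hm hmk γ A a hA ha haA.ne' hrootA hroota
  obtain ⟨δ0, hδ0, hδ01, hδ0γ, g0⟩ := good_zero m k hm hk γ hγ0
  obtain ⟨δ, hδ, hd1, hd2, hd3, hd4⟩ : ∃ δ, 0 < δ ∧ δ ≤ δa ∧ δ ≤ δA ∧ δ ≤ δ0 ∧ δ ≤ a / 2 :=
    ⟨min (min δa δA) (min δ0 (a / 2)), by positivity, by simp, by simp, by simp, by simp⟩
  have fa : onsite m k γ a = 0 := by
    unfold onsite; rw [abs_of_pos ha]; linear_combination a * hroota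
  have fA : onsite m k γ A = 0 := by
    unfold onsite; rw [abs_of_pos hA]; linear_combination A * hrootA
  have f0 : onsite m k γ 0 = 0 := by simp [onsite]
  set Θ := |θa| + |θA| + 1 / 2 with hΘ
  have hval : ∀ v : ℝ, (v = a ∨ v = -a ∨ v = A ∨ v = -A) →
      onsite m k γ v = 0 ∧ a ≤ |v| ∧ |v| ≤ A ∧
      ∃ θ, θ ≠ 0 ∧ |θ| ≤ Θ ∧ GoodAt (onsite m k γ) v θ δ := by
    have b1 : |θa| ≤ Θ := by have := abs_nonneg θA; linarith
    have b2 : |θA| ≤ Θ := by have := abs_nonneg θa; linarith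
    rintro v (rfl | rfl | rfl | rfl)
    · rw [abs_of_pos ha]
      exact ⟨fa, le_rfl, haA.le, θa, hθa, b1, ga.mono hd1⟩
    · rw [abs_neg, abs_of_pos ha, onsite_neg, fa]
      exact ⟨neg_zero, le_rfl, haA.le, θa, hθa, b1, good_neg _ _ _ _ _ _ (ga.mono hd1)⟩
    · rw [abs_of_pos hA]
      exact ⟨fA, haA.le, le_rfl, θA, hθA, b2, gA.mono hd2⟩
    · rw [abs_neg, abs_of_pos hA, onsite_neg, fA]
      exact ⟨neg_zero, haA.le, le_rfl, θA, hθA, b2, good_neg _ _ _ _ _ _ (gA.mono hd2)⟩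
  set e : ℤ → ℝ := fun n => extFin N ut (min (n - 1).toNat (N - 1)) with hedef
  have heval : ∀ n, e n = a ∨ e n = -a ∨ e n = A ∨ e n = -A := by
    intro n
    have hlt : min (n - 1).toNat (N - 1) < N := by omega
    simp only [hedef, extFin, hlt, dif_pos]
    exact hut _
  have hcore : ∀ n : ℤ, 1 ≤ n → n ≤ N → limitSeq N ut n = e n := by
    intro n h1 h2
    simp only [limitSeq, hedef]
    rw [if_pos ⟨h1, h2⟩, min_eq_left (by omega)]
  have htail0 : ∀ n : ℤ, ¬ (1 ≤ n ∧ n ≤ N) → limitSeq N ut n = 0 := by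
    intro n h
    simp only [limitSeq]
    rw [if_neg h]
  have hθex : ∀ n : ℤ, ∃ θ, θ ≠ 0 ∧ |θ| ≤ Θ ∧ GoodAt (onsite m k γ) (limitSeq N ut n) θ δ ∧
      (¬ (1 ≤ n ∧ n ≤ N) → θ = 1 / 2) := by
    intro n
    by_cases h : 1 ≤ n ∧ n ≤ N
    · rw [hcore n h.1 h.2]
      obtain ⟨-, -, -, θ, t1, t2, t3⟩ := hval _ (heval n)
      exact ⟨θ, t1, t2, t3, fun h' => absurd h h'⟩
    · rw [htail0 n h]
      refine ⟨1 / 2, by norm_num, ?_, g0.mono hd3, fun _ => rfl⟩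
      rw [abs_of_pos (by norm_num)]
      have := abs_nonneg θa
      have := abs_nonneg θA
      linarith
  choose θ hθ0 hθb hgood hθt using hθex
  obtain ⟨ε₀, hε₀, K, hK, H⟩ := lattice m k hk γ hγ0 N hN (limitSeq N ut) e θ Θ δ (A * 2 ^ N) a
    (by positivity) (by positivity) ha hδ (hd3.trans hδ01)
    ((mul_le_mul_of_nonneg_left hd3 hγ0.le).trans hδ0γ) hd4 hθ0 hθb hgood
    (fun n => by
      by_cases h : 1 ≤ n ∧ n ≤ N
      · rw [hcore n h.1 h.2]; exact (hval _ (heval n)).1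
      · rw [htail0 n h]; exact f0)
    (fun n => (hval _ (heval n)).2.1) hcore
    (fun n h => by
      refine ⟨htail0 n h, hθt n h, ?_, ?_⟩
      · simp only [hedef]; congr 1; omega
      · simp only [hedef]; congr 1; omega)
    (fun n => by
      by_cases h : 1 ≤ n ∧ n ≤ N
      · rw [hcore n h.1 h.2]
        have h1 : ((1 : ℝ) / 2) ^ N ≤ (1 / 2) ^ n.natAbs :=
          pow_le_pow_of_le_one (by norm_num) (by norm_num) (by omega)
        have h2 : (2 : ℝ) ^ N * (1 / 2) ^ N = 1 := by rw [← mul_pow]; norm_num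
        calc |e n| ≤ A := (hval _ (heval n)).2.2.1
          _ = A * 2 ^ N * (1 / 2) ^ N := by rw [mul_assoc, h2, mul_one]
          _ ≤ _ := by gcongr
      · rw [htail0 n h, abs_zero]; positivity)
  have hW : Summable (fun n : ℤ => ((1 : ℝ) / 4) ^ n.natAbs) := by
    apply Summable.of_nat_of_neg
    · simpa using summable_geometric_of_lt_one (r := (1 : ℝ) / 4) (by norm_num) (by norm_num)
    · simpa using summable_geometric_of_lt_one (r := (1 : ℝ) / 4) (by norm_num) (by norm_num)
  have hsq : ∀ n : ℤ, (((1 : ℝ) / 2) ^ n.natAbs) ^ 2 = (1 / 4) ^ n.natAbs := by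
    intro n
    rw [← pow_mul, mul_comm, pow_mul]; norm_num
  have hsum : ∀ (v : ℤ → ℝ) (c : ℝ), (∀ n, |v n| ≤ c * (1 / 2) ^ n.natAbs) →
      (∀ n, v n ^ 2 ≤ c ^ 2 * (1 / 4) ^ n.natAbs) ∧ Summable (fun n => v n ^ 2) := by
    intro v c hv
    have h1 : ∀ n, v n ^ 2 ≤ c ^ 2 * (1 / 4) ^ n.natAbs := by
      intro n
      rw [← hsq, ← mul_pow, ← sq_abs]
      exact pow_le_pow_left₀ (abs_nonneg _) (hv n) 2
    exact ⟨h1, Summable.of_nonneg_of_le (fun n => sq_nonneg _) h1 (hW.mul_left _)⟩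
  set W := ∑' n : ℤ, ((1 : ℝ) / 4) ^ n.natAbs with hWdef
  refine ⟨ε₀, hε₀, K * Real.sqrt W + 1, by positivity, ?_⟩
  intro ε hε hε'
  obtain ⟨u, hu1, hu2, hu3⟩ := H ε hε hε'
  have hd := hsum (fun n => u n - limitSeq N ut n) (K * ε) hu2
  have hsign : ∀ x y : ℝ, 0 < x * y → Real.sign x = Real.sign y := by
    intro x y h
    rcases pos_and_pos_or_neg_and_neg_of_mul_pos h with ⟨h1, h2⟩ | ⟨h1, h2⟩
    · rw [Real.sign_of_pos h1, Real.sign_of_pos h2]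
    · rw [Real.sign_of_neg h1, Real.sign_of_neg h2]
  refine ⟨u, ?_, ?_, hd.2, ?_, ?_, ?_, ?_, ?_, ?_⟩
  · intro n
    have := hu1 n
    unfold onsite at this
    linear_combination this
  · refine (hsum u (K * ε + A * 2 ^ N) ?_).2
    intro n
    have h1 := hu2 n
    have h2 : |limitSeq N ut n| ≤ A * 2 ^ N * (1 / 2) ^ n.natAbs := by
      by_cases h : 1 ≤ n ∧ n ≤ N
      · rw [hcore n h.1 h.2]
        have h1 : ((1 : ℝ) / 2) ^ N ≤ (1 / 2) ^ n.natAbs :=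
          pow_le_pow_of_le_one (by norm_num) (by norm_num) (by omega)
        have h2 : (2 : ℝ) ^ N * (1 / 2) ^ N = 1 := by rw [← mul_pow]; norm_num
        calc |e n| ≤ A := (hval _ (heval n)).2.2.1
          _ = A * 2 ^ N * (1 / 2) ^ N := by rw [mul_assoc, h2, mul_one]
          _ ≤ _ := by gcongr
      · rw [htail0 n h, abs_zero]; positivity
    have : |u n| ≤ |u n - limitSeq N ut n| + |limitSeq N ut n| := by
      simpa using abs_add_le (u n - limitSeq N ut n) (limitSeq N ut n)
    linarith
  · have h1 : ∑' n : ℤ, (u n - limitSeq N ut n) ^ 2 ≤ (K * ε) ^ 2 * W := by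
      rw [hWdef, ← tsum_mul_left]
      exact hd.2.tsum_le_tsum hd.1 (hW.mul_left _)
    calc _ ≤ Real.sqrt ((K * ε) ^ 2 * W) := Real.sqrt_le_sqrt h1
      _ = K * ε * Real.sqrt W := by
        rw [Real.sqrt_mul (by positivity), Real.sqrt_sq (by positivity)]
      _ ≤ _ := by linarith
  · intro n h
    have := hu3 n
    rw [h, zero_mul] at this
    exact lt_irrefl _ this
  · intro n h1 h2
    have : extFin N ut (n - 1).toNat = e n := by
      simp only [hedef]; congr 1; omega
    rw [this]; exact hsign _ _ (hu3 n)
  · intro n h1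
    have : extFin N ut 0 = e n := by
      simp only [hedef]; congr 1; omega
    rw [this]; exact hsign _ _ (hu3 n)
  · intro n h1
    have : extFin N ut (N - 1) = e n := by
      simp only [hedef]; congr 1; omega
    rw [this]; exact hsign _ _ (hu3 n)
  · have hiff : ∀ n, u n * u (n + 1) < 0 ↔ e n * e (n + 1) < 0 := by
      intro n
      have h1 := hu3 n
      have h2 := hu3 (n + 1)
      have h3 : 0 < (u n * u (n + 1)) * (e n * e (n + 1)) := by
        have := mul_pos h1 h2
        linarith
      constructor
      · intro h; exact neg_of_mul_pos_right h3 h.le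
      · intro h; exact neg_of_mul_pos_left h3 h.le
    have hset : {n : ℤ | u n * u (n + 1) < 0} =
        (((Finset.range (N - 1)).filter
          (fun i => extFin N ut i * extFin N ut (i + 1) < 0)).image
            (fun i : ℕ => (i : ℤ) + 1) : Finset ℤ) := by
      ext n
      simp only [Set.mem_setOf_eq, hiff, Finset.coe_image, Set.mem_image, Finset.mem_coe,
        Finset.mem_filter, Finset.mem_range]
      constructor
      · intro h
        by_cases hn : 1 ≤ n ∧ n < N
        · refine ⟨(n - 1).toNat, ⟨by omega, ?_⟩, by omega⟩
          have e1 : e n = extFin N ut (n - 1).toNat := by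
            simp only [hedef]; congr 1; omega
          have e2 : e (n + 1) = extFin N ut ((n - 1).toNat + 1) := by
            simp only [hedef]; congr 1; omega
          rwa [← e1, ← e2]
        · have : e (n + 1) = e n := by
            simp only [hedef]; congr 1; omega
          rw [this] at h
          exact absurd h (not_lt.2 (mul_self_nonneg _))
      · rintro ⟨i, ⟨hi, h⟩, rfl⟩
        have e1 : e ((i : ℤ) + 1) = extFin N ut i := by
          simp only [hedef]; congr 1; omega
        have e2 : e ((i : ℤ) + 1 + 1) = extFin N ut (i + 1) := by
          simp only [hedef]; congr 1; omega
        rwa [e1, e2]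
    rw [hset]
    have hinj : Function.Injective (fun i : ℕ => (i : ℤ) + 1) := by
      intro i j h
      simpa using h
    rw [← Finset.card_image_of_injective _ hinj]
    simp only [Finset.coe_sort_coe, Nat.card_eq_fintype_card, Fintype.card_coe]
end

section
/- Let p, q be integers with 2 ≤ p < q, let γ ∈ (0, γ_{p,q}), and let a < A be the two positive roots of g(u) = 1 − u^{p−1} + γ u^{q−1}. Let N ≥ 1 and let ũ ∈ ℝ^N satisfy |ũ_n| = a for all n. Then all roots of the characteristic polynomial of the matrix product L̃⁺L̃⁻ are real; 0 is a simple root; exactly N − N₀(ũ) − 1 roots counted with multiplicity are negative; and exactly N₀(ũ) roots counted with multiplicity are positive. -/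
/-- Extension of a vector `Fin N → ℝ` to `ℤ` by zero (0-indexed). -/
def extZ (N : ℕ) (ut : Fin N → ℝ) : ℤ → ℝ :=
  fun k => if h : 0 ≤ k ∧ k < (N : ℤ) then ut ⟨k.toNat, by omega⟩ else 0

/-- The `N×N` symmetric tridiagonal matrix `L̃⁻` with diagonal entries
`(ũ_{n−1} + ũ_{n+1})/ũ_n` (with the convention `ũ₀ = ũ_{N+1} = 0`) and `−1` on the
sub- and super-diagonal. -/
noncomputable def Lminus (N : ℕ) (ut : Fin N → ℝ) : Matrix (Fin N) (Fin N) ℝ :=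
  fun i j =>
    if i = j then (extZ N ut (((i : ℕ) : ℤ) - 1) + extZ N ut (((i : ℕ) : ℤ) + 1)) / ut i
    else if (((i : ℕ) : ℤ) - ((j : ℕ) : ℤ)).natAbs = 1 then -1 else 0

/-- The `N×N` diagonal matrix `L̃⁺` with entries `1 − p|ũ_n|^{p−1} + γ q |ũ_n|^{q−1}`. -/
noncomputable def Lplus (N : ℕ) (p q : ℕ) (γ : ℝ) (ut : Fin N → ℝ) :
    Matrix (Fin N) (Fin N) ℝ :=
  Matrix.diagonal (fun n => 1 - (p : ℝ) * |ut n| ^ (p - 1) + γ * (q : ℝ) * |ut n| ^ (q - 1))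

/-- The number `N₀(ũ)` of sign alternations of `ũ`. -/
noncomputable def nFlips (N : ℕ) (ut : Fin N → ℝ) : ℕ :=
  ((Finset.range (N - 1)).filter
    (fun i => (if h : i < N then ut ⟨i, h⟩ else 0) *
              (if h : i + 1 < N then ut ⟨i + 1, h⟩ else 0) < 0)).card

open Matrix in
/-- One half of Sylvester's law of inertia. -/
lemma inertia_le {n : Type*} [Fintype n] [DecidableEq n] (Q : Matrix n n ℝ) (d e : n → ℝ)
    (h : Qᵀ * diagonal d * Q = diagonal e) :
    Fintype.card {i // 0 < e i} ≤ Fintype.card {i // 0 < d i} := by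
  by_contra hlt
  push Not at hlt
  let f : (n → ℝ) →ₗ[ℝ] (({i // ¬ 0 < e i} ⊕ {i // 0 < d i}) → ℝ) :=
    { toFun := fun v => Sum.elim (fun i => v i) (fun j => (Q *ᵥ v) j)
      map_add' := by
        intro x y
        ext (i | i) <;> simp [mulVec_add]
      map_smul' := by
        intro c y
        ext (i | i) <;> simp [mulVec_smul] }
  have hker : LinearMap.ker f ≠ ⊥ := by
    apply LinearMap.ker_ne_bot_of_finrank_lt
    simp only [Module.finrank_fintype_fun_eq_card, Fintype.card_sum]
    have := Fintype.card_subtype_compl (fun i => 0 < e i)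
    have h2 := Fintype.card_subtype_le (fun i => 0 < e i)
    omega
  obtain ⟨v, hv, hv0⟩ := (Submodule.ne_bot_iff _).1 hker
  have hfv : f v = 0 := hv
  have h1 : ∀ i, ¬ 0 < e i → v i = 0 := fun i hi => congrFun hfv (Sum.inl ⟨i, hi⟩)
  have h2 : ∀ i, 0 < d i → (Q *ᵥ v) i = 0 := fun i hi => congrFun hfv (Sum.inr ⟨i, hi⟩)
  have key : (Q *ᵥ v) ⬝ᵥ (diagonal d *ᵥ (Q *ᵥ v)) = v ⬝ᵥ (diagonal e *ᵥ v) := by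
    rw [← h, ← mulVec_mulVec, ← mulVec_mulVec, dotProduct_mulVec v, vecMul_transpose]
  simp only [dotProduct, mulVec_diagonal] at key
  have hle : ∑ i, (Q *ᵥ v) i * (d i * (Q *ᵥ v) i) ≤ 0 := by
    apply Finset.sum_nonpos
    intro i _
    by_cases hi : 0 < d i
    · simp [h2 i hi]
    · nlinarith [mul_self_nonneg ((Q *ᵥ v) i)]
  have hgt : 0 < ∑ i, v i * (e i * v i) := by
    obtain ⟨i, hi⟩ := Function.ne_iff.1 hv0
    apply Finset.sum_pos'
    · intro j _
      by_cases hj : 0 < e j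
      · nlinarith [mul_self_nonneg (v j)]
      · simp [h1 j hj]
    · refine ⟨i, Finset.mem_univ _, ?_⟩
      have hei : 0 < e i := by
        by_contra hc
        exact hi (h1 i hc)
      have : 0 < v i * v i := mul_self_pos.2 hi
      nlinarith
  linarith

open Matrix in
lemma inertia_eq {n : Type*} [Fintype n] [DecidableEq n] (Q : Matrix n n ℝ) (hQ : IsUnit Q.det)
    (d e : n → ℝ) (h : Qᵀ * diagonal d * Q = diagonal e) :
    Fintype.card {i // 0 < e i} = Fintype.card {i // 0 < d i} := by
  apply le_antisymm (inertia_le Q d e h)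
  apply inertia_le Q⁻¹ e d
  rw [← h, transpose_nonsing_inv]
  have hQt : IsUnit Qᵀ.det := by rwa [det_transpose]
  rw [← mul_assoc, ← mul_assoc, nonsing_inv_mul _ hQt, one_mul, mul_assoc, mul_nonsing_inv _ hQ,
    mul_one]

open Matrix in
lemma inertia_spec {n : Type*} [Fintype n] [DecidableEq n] (M P : Matrix n n ℝ)
    (hP : IsUnit P.det) (d : n → ℝ) (h : M = Pᵀ * diagonal d * P) :
    (∀ z ∈ (M.charpoly.map (algebraMap ℝ ℂ)).roots, z.im = 0) ∧
    M.charpoly.rootMultiplicity 0 = Fintype.card {i // d i = 0} ∧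
    (M.charpoly.roots.filter (fun x => x < 0)).card = Fintype.card {i // d i < 0} ∧
    (M.charpoly.roots.filter (fun x => 0 < x)).card = Fintype.card {i // 0 < d i} := by
  have hM : M.IsHermitian := by
    rw [h, IsHermitian, conjTranspose_eq_transpose_of_trivial]
    simp [transpose_mul, mul_assoc]
  have hspec := hM.conjStarAlgAut_star_eigenvectorUnitary
  rw [Unitary.conjStarAlgAut_star_apply] at hspec
  set U : Matrix n n ℝ := (hM.eigenvectorUnitary : Matrix n n ℝ) with hU
  set e := hM.eigenvalues with he
  have hUU : star U * U = 1 := Unitary.coe_star_mul_self _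
  have hUdet : IsUnit U.det := by
    apply (isUnit_iff_isUnit_det _).1
    exact IsUnit.of_mul_eq_one_right _ hUU
  have hQ : IsUnit (P * U).det := by rw [det_mul]; exact hP.mul hUdet
  have hst : star U = Uᵀ := by rw [star_eq_conjTranspose, conjTranspose_eq_transpose_of_trivial]
  have hQe : (P * U)ᵀ * diagonal d * (P * U) = diagonal e := by
    have : diagonal e = Uᵀ * M * U := by
      rw [← hst]; exact hspec.symm
    rw [this, h]
    simp [transpose_mul, mul_assoc]
  have hpos := inertia_eq _ hQ d e hQe
  have hneg := inertia_eq (P * U) hQ (-d) (-e) (by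
    have h1 : diagonal (-d) = - diagonal d := by rw [diagonal_neg]; rfl
    have h2 : diagonal (-e) = - diagonal e := by rw [diagonal_neg]; rfl
    rw [h1, h2, ← hQe]; simp only [Matrix.mul_neg, Matrix.neg_mul])
  simp only [Pi.neg_apply, Left.neg_pos_iff] at hneg
  have hroots : M.charpoly.roots = Multiset.map e Finset.univ.val := by
    rw [hM.roots_charpoly_eq_eigenvalues]; rfl
  have hcount : ∀ (r : ℝ → Prop) [DecidablePred r],
      (M.charpoly.roots.filter r).card = Fintype.card {i // r (e i)} := by
    intro r _
    rw [hroots, Multiset.filter_map, Multiset.card_map, Fintype.card_subtype]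
    rfl
  have htri : ∀ (f : n → ℝ), Fintype.card {i // f i = 0} + Fintype.card {i // f i < 0}
      + Fintype.card {i // 0 < f i} = Fintype.card n := by
    intro f
    simp only [Fintype.card_subtype, Finset.card_filter, ← Finset.sum_add_distrib]
    rw [← Finset.card_univ, Finset.card_eq_sum_ones]
    apply Finset.sum_congr rfl
    intro i _
    rcases lt_trichotomy (f i) 0 with hh | hh | hh
    · simp [hh, hh.ne, hh.le]
    · simp [hh]
    · simp [hh, hh.ne', hh.le]
  refine ⟨?_, ?_, ?_, ?_⟩
  · rw [hM.splits_charpoly.roots_map]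
    intro z hz
    obtain ⟨x, -, rfl⟩ := Multiset.mem_map.1 hz
    simp
  · rw [← Polynomial.count_roots, Multiset.count_eq_card_filter_eq, hcount]
    have h1 := htri e
    have h2 := htri d
    simp only [eq_comm (a := (0:ℝ))]
    omega
  · rw [hcount]; exact hneg
  · rw [hcount]; exact hpos

lemma slope_at_a_neg (p q : ℕ) (hp : 2 ≤ p) (hpq : p < q) (γ a A : ℝ) (ha : 0 < a) (haA : a < A)
    (hroota : 1 - a ^ (p - 1) + γ * a ^ (q - 1) = 0)
    (hrootA : 1 - A ^ (p - 1) + γ * A ^ (q - 1) = 0) :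
    1 - (p : ℝ) * a ^ (p - 1) + γ * (q : ℝ) * a ^ (q - 1) < 0 := by
  obtain ⟨m, rfl⟩ : ∃ m, p = m + 1 := ⟨p - 1, by omega⟩
  obtain ⟨n, rfl⟩ : ∃ n, q = n + 1 := ⟨q - 1, by omega⟩
  simp only [Nat.add_sub_cancel] at *
  have hm : 0 < (m : ℝ) := by exact_mod_cast (by omega : 0 < m)
  have hmn : (m : ℝ) < n := by exact_mod_cast (by omega : m < n)
  obtain ⟨t, ht⟩ : ∃ t, t = A / a := ⟨_, rfl⟩
  have hA : A = a * t := by rw [ht]; field_simp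
  have ht1 : 1 < t := by rw [ht, lt_div_iff₀ ha]; linarith
  rw [hA, mul_pow, mul_pow] at hrootA
  have hs : 1 < t ^ m := one_lt_pow₀ ht1 (by omega)
  have hb := one_add_mul_self_lt_rpow_one_add (s := t ^ m - 1) (by linarith) (by linarith)
    (p := (n : ℝ) / m) (by rw [lt_div_iff₀ hm]; linarith)
  have hpow : (1 + (t ^ m - 1)) ^ ((n : ℝ) / m) = t ^ n := by
    rw [add_sub_cancel, ← Real.rpow_natCast, ← Real.rpow_mul (by linarith),
      mul_div_cancel₀ _ hm.ne', Real.rpow_natCast]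
  rw [hpow] at hb
  have hb2 : m + n * (t ^ m - 1) < m * t ^ n := by
    have := mul_lt_mul_of_pos_left hb hm
    have h3 : (m : ℝ) * (1 + n / m * (t ^ m - 1)) = m + n * (t ^ m - 1) := by field_simp
    linarith
  have hX : γ * a ^ n = a ^ m - 1 := by linarith
  have hkey : a ^ m * (t ^ n - t ^ m) = t ^ n - 1 := by
    have : γ * (a ^ n * t ^ n) = (a ^ m - 1) * t ^ n := by rw [← hX]; ring
    rw [this] at hrootA
    linarith
  have hD : 0 < t ^ n - t ^ m := sub_pos.2 (pow_lt_pow_right₀ ht1 (by omega))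
  have hlt : a ^ m * (n - m) < n := by
    by_contra hc
    push Not at hc
    have := mul_le_mul_of_nonneg_right hc hD.le
    have h4 : a ^ m * (n - m) * (t ^ n - t ^ m) = (t ^ n - 1) * (n - m) := by rw [← hkey]; ring
    nlinarith
  push_cast
  have : γ * ((n : ℝ) + 1) * a ^ n = (a ^ m - 1) * (n + 1) := by rw [← hX]; ring
  rw [this]
  linarith

/-- The bidiagonal congruence matrix. -/
noncomputable def congP (N : ℕ) (ut : Fin N → ℝ) : Matrix (Fin N) (Fin N) ℝ :=
  fun i j => ((if i = j then 1 else 0) - (if i.val + 1 = j.val then 1 else 0)) / ut j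

/-- The diagonal entries after congruence. -/
noncomputable def congD (N : ℕ) (c : ℝ) (ut : Fin N → ℝ) : Fin N → ℝ :=
  fun i => c * (ut i * extZ N ut ((i.val : ℤ) + 1))

lemma extZ_val (N : ℕ) (ut : Fin N → ℝ) (i : Fin N) : extZ N ut (i.val : ℤ) = ut i := by
  unfold extZ
  rw [dif_pos ⟨by omega, by have := i.isLt; omega⟩]
  rfl

lemma extZ_out (N : ℕ) (ut : Fin N → ℝ) (k : ℤ) (hk : k < 0 ∨ (N : ℤ) ≤ k) :
    extZ N ut k = 0 := by
  unfold extZ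
  rw [dif_neg (by omega)]

lemma congP_det (N : ℕ) (ut : Fin N → ℝ) (hu : ∀ i, ut i ≠ 0) : IsUnit (congP N ut).det := by
  rw [Matrix.det_of_isUpperTriangular]
  · rw [isUnit_iff_ne_zero, Finset.prod_ne_zero_iff]
    intro i _
    simp [congP, hu i]
  · intro i j hij
    have hij' : j < i := hij
    have h1 : i ≠ j := hij'.ne'
    have h2 : ¬ (i.val + 1 = j.val) := by
      have : j.val < i.val := hij'
      omega
    simp [congP, h1, h2]

lemma shift_sum (N : ℕ) (c : ℝ) (ut : Fin N → ℝ) (i : Fin N) :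
    ∑ k : Fin N, (if k.val + 1 = i.val then congD N c ut k else 0)
      = c * (extZ N ut ((i.val : ℤ) - 1) * ut i) := by
  by_cases hi : i.val = 0
  · rw [extZ_out N ut _ (Or.inl (by omega))]
    rw [Finset.sum_eq_zero]
    · simp
    · intro k _
      rw [if_neg (by omega)]
  · have hlt : i.val - 1 < N := by have := i.isLt; omega
    rw [Finset.sum_eq_single ⟨i.val - 1, hlt⟩]
    · have e1 : (((i.val - 1 : ℕ) : ℤ)) = (i.val : ℤ) - 1 := by omega
      rw [if_pos (by simp only; omega)]
      unfold congD
      simp only [e1, sub_add_cancel, extZ_val]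
      rw [← extZ_val N ut ⟨i.val - 1, hlt⟩]
      simp only [e1]
    · intro k _ hk
      rw [if_neg]
      intro h
      apply hk
      ext
      simp only
      omega
    · simp

lemma cong_eq (N : ℕ) (c : ℝ) (ut : Fin N → ℝ) (hu : ∀ i, ut i ≠ 0) :
    c • Lminus N ut
      = (congP N ut).transpose * Matrix.diagonal (congD N c ut) * congP N ut := by
  ext i j
  rw [Matrix.mul_apply]
  simp only [Matrix.mul_diagonal, Matrix.transpose_apply, Matrix.smul_apply, smul_eq_mul]
  have hui := hu i
  have huj := hu j
  by_cases hij : i = j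
  · subst hij
    have hsum : ∀ k : Fin N, congP N ut k i * congD N c ut k * congP N ut k i
        = ((if k = i then congD N c ut k else 0)
          + (if k.val + 1 = i.val then congD N c ut k else 0)) * (1 / (ut i * ut i)) := by
      intro k
      unfold congP
      by_cases h1 : k = i
      · subst h1
        simp
        field_simp
      · by_cases h2 : k.val + 1 = i.val
        · simp [h1, h2]
          field_simp
        · simp [h1, h2]
    rw [Finset.sum_congr rfl (fun k _ => hsum k), ← Finset.sum_mul, Finset.sum_add_distrib,
      shift_sum]
    simp only [Finset.sum_ite_eq', Finset.mem_univ, if_true]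
    unfold Lminus congD
    rw [if_pos rfl]
    field_simp
    ring
  · have hsum : ∀ k : Fin N, congP N ut k i * congD N c ut k * congP N ut k j
        = (if k = i then (if i.val + 1 = j.val then - congD N c ut i else 0) / (ut i * ut j) else 0)
          + (if k = j then (if j.val + 1 = i.val then - congD N c ut j else 0) / (ut i * ut j)
              else 0) := by
      intro k
      have hij2 : i.val ≠ j.val := fun h => hij (Fin.ext h)
      unfold congP
      by_cases h1 : k = i
      · subst h1
        by_cases h2 : k.val + 1 = j.val
        · simp [hij, h2, hij2, hij2.symm]
          field_simp
        · simp [hij, h2, hij2, hij2.symm]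
      · by_cases h2 : k = j
        · subst h2
          by_cases h3 : k.val + 1 = i.val
          · simp [h1, h3, hij2, hij2.symm]
            field_simp
          · simp [h1, h3, hij2, hij2.symm]
        · by_cases h3 : k.val + 1 = i.val
          · have h4 : ¬ (k.val + 1 = j.val) := by omega
            simp [h1, h2, h4]
          · simp [h1, h2, h3]
    rw [Finset.sum_congr rfl (fun k _ => hsum k), Finset.sum_add_distrib]
    simp only [Finset.sum_ite_eq', Finset.mem_univ, if_true]
    unfold Lminus
    rw [if_neg hij]
    by_cases h1 : i.val + 1 = j.val
    · have h2 : ¬ (j.val + 1 = i.val) := by omega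
      rw [if_pos h1, if_neg h2, if_pos (by omega)]
      have : extZ N ut ((i.val : ℤ) + 1) = ut j := by
        rw [← extZ_val N ut j, ← h1]; push_cast; rfl
      unfold congD
      rw [this]
      field_simp
      ring
    · by_cases h2 : j.val + 1 = i.val
      · rw [if_neg h1, if_pos h2, if_pos (by omega)]
        have : extZ N ut ((j.val : ℤ) + 1) = ut i := by
          rw [← extZ_val N ut i, ← h2]; push_cast; rfl
        unfold congD
        rw [this]
        field_simp
        ring
      · rw [if_neg h1, if_neg h2, if_neg (by omega)]
        simp

lemma congD_zero_iff (N : ℕ) (c : ℝ) (hc : c < 0) (ut : Fin N → ℝ) (hu : ∀ i, ut i ≠ 0)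
    (i : Fin N) : congD N c ut i = 0 ↔ i.val + 1 = N := by
  have hiN := i.isLt
  unfold congD
  constructor
  · intro h
    by_contra hne
    have e : ((i.val : ℤ) + 1) = (((⟨i.val + 1, by omega⟩ : Fin N).val : ℕ) : ℤ) := by
      push_cast; rfl
    rw [e, extZ_val] at h
    simp [hc.ne, hu] at h
  · intro h
    rw [extZ_out N ut _ (Or.inr (by omega))]
    simp

lemma congD_card_zero (N : ℕ) (hN : 1 ≤ N) (c : ℝ) (hc : c < 0) (ut : Fin N → ℝ)
    (hu : ∀ i, ut i ≠ 0) : Fintype.card {i // congD N c ut i = 0} = 1 := by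
  rw [Fintype.card_eq_one_iff]
  refine ⟨⟨⟨N - 1, by omega⟩, (congD_zero_iff N c hc ut hu _).2 (by simp only; omega)⟩, ?_⟩
  rintro ⟨i, hi⟩
  have := (congD_zero_iff N c hc ut hu i).1 hi
  apply Subtype.ext
  apply Fin.ext
  simp only
  omega

lemma congD_card_pos (N : ℕ) (c : ℝ) (hc : c < 0) (ut : Fin N → ℝ) :
    Fintype.card {i // 0 < congD N c ut i} = nFlips N ut := by
  have key : ∀ i : Fin N, 0 < congD N c ut i ↔
      (i.val < N - 1 ∧ (if h : i.val < N then ut ⟨i.val, h⟩ else 0) *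
        (if h : i.val + 1 < N then ut ⟨i.val + 1, h⟩ else 0) < 0) := by
    intro i
    have hiN := i.isLt
    unfold congD
    rw [dif_pos hiN]
    by_cases h : i.val + 1 < N
    · have e : ((i.val : ℤ) + 1) = (((⟨i.val + 1, h⟩ : Fin N).val : ℕ) : ℤ) := by
        push_cast; rfl
      rw [e, extZ_val, dif_pos h]
      constructor
      · intro h1
        refine ⟨by omega, ?_⟩
        by_contra h2
        push Not at h2
        nlinarith
      · rintro ⟨-, h2⟩
        exact mul_pos_of_neg_of_neg hc h2
    · rw [extZ_out N ut _ (Or.inr (by omega))]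
      simp [h]
  rw [Fintype.card_subtype]
  unfold nFlips
  apply Finset.card_bij (fun i _ => i.val)
  · intro i hi
    rw [Finset.mem_filter, Finset.mem_range]
    exact (key i).1 (Finset.mem_filter.1 hi).2
  · intro i _ j _ h
    exact Fin.ext h
  · intro b hb
    rw [Finset.mem_filter, Finset.mem_range] at hb
    exact ⟨⟨b, by omega⟩, Finset.mem_filter.2 ⟨Finset.mem_univ _, (key ⟨b, by omega⟩).2 hb⟩, rfl⟩

/-- For a code with `|ũ_n| = a` for all `n`, all roots of the characteristic polynomial
of `L̃⁺L̃⁻` are real; `0` is a simple root; exactly `N − N₀(ũ) − 1` roots are negative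
and exactly `N₀(ũ)` roots are positive, counted with multiplicity. -/
theorem LplusLminus_spectrum_alla (p q : ℕ) (hp : 2 ≤ p) (hpq : p < q)
    (γ : ℝ) (hγ0 : 0 < γ) (hγ : γ < gammaCrit p q)
    (a A : ℝ) (ha : 0 < a) (haA : a < A)
    (hroota : 1 - a ^ (p - 1) + γ * a ^ (q - 1) = 0)
    (hrootA : 1 - A ^ (p - 1) + γ * A ^ (q - 1) = 0)
    (N : ℕ) (hN : 1 ≤ N) (ut : Fin N → ℝ) (hut : ∀ n, |ut n| = a) :
    (∀ z ∈ ((Lplus N p q γ ut * Lminus N ut).charpoly.map (algebraMap ℝ ℂ)).roots,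
      z.im = 0) ∧
    (Lplus N p q γ ut * Lminus N ut).charpoly.rootMultiplicity 0 = 1 ∧
    (((Lplus N p q γ ut * Lminus N ut).charpoly.roots.filter (fun x => x < 0)).card
      = N - nFlips N ut - 1) ∧
    (((Lplus N p q γ ut * Lminus N ut).charpoly.roots.filter (fun x => 0 < x)).card
      = nFlips N ut) := by
  have hu : ∀ i, ut i ≠ 0 := by
    intro i h
    have := hut i
    rw [h, abs_zero] at this
    exact ha.ne this
  obtain ⟨c, hcdef⟩ : ∃ c, c = 1 - (p : ℝ) * a ^ (p - 1) + γ * (q : ℝ) * a ^ (q - 1) := ⟨_, rfl⟩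
  have hc : c < 0 := by
    rw [hcdef]; exact slope_at_a_neg p q hp hpq γ a A ha haA hroota hrootA
  have hM : Lplus N p q γ ut * Lminus N ut = c • Lminus N ut := by
    unfold Lplus
    simp only [hut]
    rw [← hcdef]
    ext i j
    rw [Matrix.diagonal_mul]
    rfl
  have hspec := inertia_spec _ _ (congP_det N ut hu) _ (cong_eq N c ut hu)
  rw [hM]
  have hz := congD_card_zero N hN c hc ut hu
  have hpos := congD_card_pos N c hc ut
  obtain ⟨s1, s2, s3, s4⟩ := hspec
  refine ⟨s1, s2.trans hz, ?_, s4.trans hpos⟩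
  rw [s3]
  have htri : Fintype.card {i // congD N c ut i = 0} + Fintype.card {i // congD N c ut i < 0}
      + Fintype.card {i // 0 < congD N c ut i} = N := by
    simp only [Fintype.card_subtype, Finset.card_filter, ← Finset.sum_add_distrib]
    trans ∑ i : Fin N, 1
    · apply Finset.sum_congr rfl
      intro i _
      rcases lt_trichotomy (congD N c ut i) 0 with hh | hh | hh
      · simp [hh, hh.ne, hh.le]
      · simp [hh]
      · simp [hh, hh.ne', hh.le]
    · simp
  omega
end

section
/- Let p, q be integers with 2 ≤ p < q, let γ ∈ (0, γ_{p,q}), and let a < A be the two positive roots of g(u) = 1 − u^{p−1} + γ u^{q−1}. Let N ≥ 1 and let ũ ∈ ℝ^N satisfy ũ_n ∈ {a, A} for all n, and set K = #{n : ũ_n = a}. Assume the quantity s = ((L̃⁺)⁻¹ũ)·ũ = K a²/f'(a) + (N−K) A²/f'(A) is nonzero, and set σ₀ = 1 if s < 0 and σ₀ = 0 if s > 0. Then all roots of the characteristic polynomial of the matrix product L̃⁺L̃⁻ are real; 0 is a simple root; exactly K − σ₀ roots counted with multiplicity are negative; and exactly N − K − (1 − σ₀) roots counted with multiplicity are positive.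 -/
open Polynomial in
lemma aux_charpoly {N : ℕ} (M : Matrix (Fin N) (Fin N) ℝ) (u v : Fin N → ℝ)
    (hu : M.mulVec u = 0) :
    (M + Matrix.vecMulVec u v).charpoly * X = M.charpoly * (X - C (v ⬝ᵥ u)) := by
  apply Polynomial.eq_of_infinite_eval_eq
  apply Set.Infinite.mono (s := Set.Ioi (0:ℝ)) _ (Set.Ioi_infinite 0)
  intro x hx
  have hx0 : x ≠ 0 := ne_of_gt hx
  simp only [Set.mem_ofPred_eq, eval_mul, eval_sub, eval_X, eval_C, Matrix.eval_charpoly]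
  have h1 : Matrix.scalar (Fin N) x - (M + Matrix.vecMulVec u v)
      = (Matrix.scalar (Fin N) x - M) * (1 + Matrix.vecMulVec u (-(x⁻¹ • v))) := by
    rw [mul_add, mul_one, sub_mul, Matrix.mul_vecMulVec M, hu]
    ext i j
    simp [Matrix.vecMulVec_apply, Matrix.scalar_apply, Matrix.sub_apply]
    field_simp
    ring
  rw [h1, Matrix.det_mul, Matrix.vecMulVec_eq Unit, Matrix.det_one_add_replicateCol_mul_replicateRow]
  simp
  field_simp
  ring

open QuadraticMap in
lemma aux_equiv {N : ℕ} (d l : Fin N → ℝ) (Cm : Matrix (Fin N) (Fin N) ℝ) (hC : IsUnit Cm)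
    (h : Cm.transpose * Matrix.diagonal d * Cm = Matrix.diagonal l) :
    (weightedSumSquares ℝ l).Equivalent (weightedSumSquares ℝ d) := by
  have key : ∀ (w x : Fin N → ℝ), weightedSumSquares ℝ w x = x ⬝ᵥ (Matrix.diagonal w).mulVec x := by
    intro w x
    simp only [weightedSumSquares_apply, dotProduct, Matrix.mulVec_diagonal, smul_eq_mul]
    exact Finset.sum_congr rfl fun i _ => by ring
  obtain ⟨c, hc⟩ := hC
  refine ⟨⟨Matrix.toLinearEquiv' Cm (by rw [← hc]; exact c.invertible), fun x => ?_⟩⟩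
  have : (Matrix.toLinearEquiv' Cm (by rw [← hc]; exact c.invertible)) x = Cm.mulVec x := rfl
  change weightedSumSquares ℝ d (Cm.mulVec x) = _
  rw [key, key, ← h, ← Matrix.mulVec_mulVec, ← Matrix.mulVec_mulVec]
  rw [Matrix.dotProduct_mulVec x, Matrix.vecMul_transpose]

lemma aux_inertia {N : ℕ} (d : Fin N → ℝ) (P : Matrix (Fin N) (Fin N) ℝ) (hP : P.PosDef) :
    (Matrix.diagonal d * P).charpoly.Splits ∧
    ((Matrix.diagonal d * P).charpoly.roots.filter (fun x => x < 0)).card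
      = (Finset.univ.filter (fun i => d i < 0)).card ∧
    ((Matrix.diagonal d * P).charpoly.roots.filter (fun x => 0 < x)).card
      = (Finset.univ.filter (fun i => 0 < d i)).card := by
  obtain ⟨B, hB⟩ : ∃ B : Matrix (Fin N) (Fin N) ℝ, P = B.transpose * B := by
    open scoped MatrixOrder in
    obtain ⟨B, hB⟩ := CStarAlgebra.nonneg_iff_eq_star_mul_self.mp hP.posSemidef.nonneg
    exact ⟨B, by simpa [Matrix.star_eq_conjTranspose] using hB⟩
  have hBu : IsUnit B := by
    have h1 := hP.isUnit
    rw [Matrix.isUnit_iff_isUnit_det] at h1 ⊢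
    rw [hB, Matrix.det_mul] at h1
    exact isUnit_of_mul_isUnit_right h1
  have hH : (B * Matrix.diagonal d * B.transpose).IsHermitian := by
    simp [Matrix.IsHermitian, Matrix.mul_assoc]
  have hch : (Matrix.diagonal d * P).charpoly = (B * Matrix.diagonal d * B.transpose).charpoly := by
    rw [hB, ← Matrix.mul_assoc, Matrix.charpoly_mul_comm, Matrix.mul_assoc]
  set U : Matrix (Fin N) (Fin N) ℝ := hH.eigenvectorUnitary.1 with hU
  have hUU : U.transpose * U = 1 := by
    have := Unitary.coe_star_mul_self hH.eigenvectorUnitary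
    simpa [Matrix.star_eq_conjTranspose] using this
  have hUu : IsUnit U := IsUnit.of_mul_eq_one_right _ hUU
  have hsp := hH.conjStarAlgAut_star_eigenvectorUnitary
  rw [Unitary.conjStarAlgAut_star_apply] at hsp
  have hsp' : U.transpose * (B * Matrix.diagonal d * B.transpose) * U
      = Matrix.diagonal hH.eigenvalues := by
    simpa [Matrix.star_eq_conjTranspose] using hsp
  have heq := aux_equiv d hH.eigenvalues (B.transpose * U)
    (IsUnit.mul ((Matrix.isUnit_transpose _).mpr hBu) hUu)
    (by rw [← hsp']; simp [Matrix.mul_assoc])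
  have hp := heq.sigPos_eq
  have hn := heq.sigNeg_eq
  rw [QuadraticForm.sigPos_weightedSumSquares, QuadraticForm.sigPos_weightedSumSquares] at hp
  rw [QuadraticForm.sigNeg_weightedSumSquares, QuadraticForm.sigNeg_weightedSumSquares] at hn
  rw [hch]
  refine ⟨hH.splits_charpoly, ?_, ?_⟩
  · rw [hH.roots_charpoly_eq_eigenvalues, Multiset.filter_map, Multiset.card_map]
    have : ((Finset.univ.filter (fun i => hH.eigenvalues i < 0)).card) = 
      (Finset.univ.filter (fun i => d i < 0)).card := by
      rw [Set.ncard_eq_toFinset_card', Set.ncard_eq_toFinset_card'] at hn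
      simpa using hn
    exact this
  · rw [hH.roots_charpoly_eq_eigenvalues, Multiset.filter_map, Multiset.card_map]
    have : ((Finset.univ.filter (fun i => 0 < hH.eigenvalues i)).card) = 
      (Finset.univ.filter (fun i => 0 < d i)).card := by
      rw [Set.ncard_eq_toFinset_card', Set.ncard_eq_toFinset_card'] at hp
      simpa using hp
    exact this

/-- adjacency weight -/
def adjW {N : ℕ} (i j : Fin N) : ℝ := if (((i : ℕ) : ℤ) - ((j : ℕ) : ℤ)).natAbs = 1 then 1 else 0

lemma adjW_comm {N : ℕ} (i j : Fin N) : adjW i j = adjW j i := by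
  unfold adjW
  congr 1
  rw [← Int.natAbs_neg, neg_sub]

lemma extZ_sum (N : ℕ) (u : Fin N → ℝ) (k : ℤ) :
    extZ N u k = ∑ j : Fin N, if ((j : ℕ) : ℤ) = k then u j else 0 := by
  unfold extZ
  split_ifs with h
  · rw [Finset.sum_eq_single ⟨k.toNat, by omega⟩]
    · simp [h.1]
    · intro b _ hb
      rw [if_neg]
      intro h2
      apply hb
      ext
      simp
      omega
    · simp
  · symm
    apply Finset.sum_eq_zero
    intro j _
    rw [if_neg]
    intro h2
    have := j.2
    omega

lemma Lminus_apply (N : ℕ) (u : Fin N → ℝ) (i j : Fin N) :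
    Lminus N u i j = (if i = j then (∑ k, adjW i k * u k) / u i else 0) - adjW i j := by
  have hsum : extZ N u (((i : ℕ) : ℤ) - 1) + extZ N u (((i : ℕ) : ℤ) + 1)
      = ∑ k, adjW i k * u k := by
    rw [extZ_sum, extZ_sum, ← Finset.sum_add_distrib]
    apply Finset.sum_congr rfl
    intro k _
    unfold adjW
    split_ifs <;> first | (exfalso; omega) | simp
  unfold Lminus
  rw [hsum]
  by_cases h : i = j
  · subst h
    simp [adjW]
  · simp only [h, if_false, adjW]
    split_ifs <;> simp

lemma Lminus_mulVec (N : ℕ) (u : Fin N → ℝ) (x : Fin N → ℝ) (i : Fin N) :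
    (Lminus N u).mulVec x i = (∑ k, adjW i k * u k) / u i * x i - ∑ k, adjW i k * x k := by
  simp only [Matrix.mulVec, dotProduct, Lminus_apply, sub_mul, Finset.sum_sub_distrib, ite_mul,
    zero_mul, Finset.sum_ite_eq, Finset.mem_univ, if_true]

lemma Lminus_quad (N : ℕ) (u : Fin N → ℝ) (hu : ∀ i, 0 < u i) (x : Fin N → ℝ) :
    x ⬝ᵥ (Lminus N u).mulVec x
      = (1/2) * ∑ i, ∑ j, adjW i j * (u i * u j) * (x i / u i - x j / u j)^2 := by
  have e1 : x ⬝ᵥ (Lminus N u).mulVec x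
      = ∑ i, ∑ j, adjW i j * (u j / u i * x i ^ 2 - x i * x j) := by
    simp only [dotProduct, Lminus_mulVec]
    apply Finset.sum_congr rfl
    intro i _
    rw [mul_sub, Finset.mul_sum, Finset.sum_div, Finset.sum_mul, Finset.mul_sum,
      ← Finset.sum_sub_distrib]
    apply Finset.sum_congr rfl
    intro j _
    ring
  have e2 : x ⬝ᵥ (Lminus N u).mulVec x
      = ∑ i, ∑ j, adjW i j * (u i / u j * x j ^ 2 - x i * x j) := by
    rw [e1, Finset.sum_comm]
    apply Finset.sum_congr rfl
    intro i _
    apply Finset.sum_congr rfl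
    intro j _
    rw [adjW_comm]
    ring
  have e3 : x ⬝ᵥ (Lminus N u).mulVec x = (1/2) * (x ⬝ᵥ (Lminus N u).mulVec x + x ⬝ᵥ (Lminus N u).mulVec x) := by
    ring
  rw [e3]
  nth_rw 1 [e1]
  rw [e2, ← Finset.sum_add_distrib]
  congr 1
  apply Finset.sum_congr rfl
  intro i _
  rw [← Finset.sum_add_distrib]
  apply Finset.sum_congr rfl
  intro j _
  have := (hu i).ne'
  have := (hu j).ne'
  field_simp
  ring

lemma Lminus_mulVec_self (N : ℕ) (u : Fin N → ℝ) (hu : ∀ i, 0 < u i) :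
    (Lminus N u).mulVec u = 0 := by
  ext i
  rw [Lminus_mulVec]
  have := (hu i).ne'
  field_simp
  simp

lemma Lminus_posDef (N : ℕ) (u v : Fin N → ℝ) (hu : ∀ i, 0 < u i) (hv : v ⬝ᵥ u ≠ 0) :
    (Lminus N u + Matrix.vecMulVec v v).PosDef := by
  apply Matrix.PosDef.of_dotProduct_mulVec_pos
  · ext i j
    simp only [Matrix.conjTranspose_apply, Matrix.add_apply, Lminus_apply, Matrix.vecMulVec_apply,
      star_trivial]
    rw [adjW_comm j i, mul_comm (v j)]
    by_cases h : i = j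
    · subst h; rfl
    · rw [if_neg h, if_neg (fun h' => h h'.symm)]
  · intro x hx
    have e : star x ⬝ᵥ (Lminus N u + Matrix.vecMulVec v v).mulVec x
        = x ⬝ᵥ (Lminus N u).mulVec x + (v ⬝ᵥ x)^2 := by
      rw [star_trivial, Matrix.add_mulVec, dotProduct_add, Matrix.vecMulVec_mulVec]
      simp [dotProduct_comm x v]
      ring
    rw [e, Lminus_quad N u hu]
    have hterm : ∀ i j, 0 ≤ adjW i j * (u i * u j) * (x i / u i - x j / u j)^2 := by
      intro i j
      have := hu i
      have := hu j
      have : 0 ≤ adjW i j := by unfold adjW; split_ifs <;> norm_num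
      positivity
    have hs0 : 0 ≤ ∑ i, ∑ j, adjW i j * (u i * u j) * (x i / u i - x j / u j)^2 :=
      Finset.sum_nonneg fun i _ => Finset.sum_nonneg fun j _ => hterm i j
    by_contra hcon
    have hsum : ∑ i, ∑ j, adjW i j * (u i * u j) * (x i / u i - x j / u j)^2 = 0 := by
      nlinarith [sq_nonneg (v ⬝ᵥ x)]
    have hvx : v ⬝ᵥ x = 0 := by
      have : (v ⬝ᵥ x)^2 = 0 := by nlinarith [sq_nonneg (v ⬝ᵥ x)]
      simpa using this
    have hz : ∀ i j, adjW i j * (u i * u j) * (x i / u i - x j / u j)^2 = 0 := by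
      intro i j
      have h1 := (Finset.sum_eq_zero_iff_of_nonneg
        (fun i _ => Finset.sum_nonneg fun j _ => hterm i j)).mp hsum i (Finset.mem_univ _)
      exact (Finset.sum_eq_zero_iff_of_nonneg (fun j _ => hterm i j)).mp h1 j (Finset.mem_univ _)
    have hadj : ∀ i j : Fin N, (i : ℕ) + 1 = j → x j / u j = x i / u i := by
      intro i j hij
      have h1 := hz i j
      have h2 : adjW i j = 1 := by
        unfold adjW
        rw [if_pos]
        omega
      rw [h2] at h1
      have := (hu i).ne'
      have := (hu j).ne'
      have h3 : x i / u i - x j / u j = 0 := by simpa [*] using h1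
      linarith
    obtain ⟨i0, hi0⟩ : ∃ i0 : Fin N, x i0 ≠ 0 := by
      by_contra h
      push Not at h
      exact hx (funext h)
    have hN : 0 < N := i0.pos
    have hconst : ∀ (k : ℕ) (hk : k < N), x ⟨k, hk⟩ / u ⟨k, hk⟩ = x ⟨0, hN⟩ / u ⟨0, hN⟩ := by
      intro k
      induction k with
      | zero => intro _; rfl
      | succ k ih =>
        intro hk
        rw [hadj ⟨k, by omega⟩ ⟨k+1, hk⟩ rfl, ih]
    set c := x ⟨0, hN⟩ / u ⟨0, hN⟩
    have hxc : x = c • u := by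
      ext i
      have := hconst i i.2
      have h0 := (hu i).ne'
      simp only [Fin.eta] at this
      rw [Pi.smul_apply, smul_eq_mul, ← this]
      field_simp
    rw [hxc, dotProduct_smul, smul_eq_mul] at hvx
    have hc : c = 0 := (mul_eq_zero.mp hvx).resolve_right hv
    apply hi0
    rw [hxc, hc]
    simp

lemma fprime_signs (p q : ℕ) (hp : 2 ≤ p) (hpq : p < q) (γ : ℝ) (hγ0 : 0 < γ)
    (a A : ℝ) (ha : 0 < a) (haA : a < A)
    (hroota : 1 - a ^ (p - 1) + γ * a ^ (q - 1) = 0)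
    (hrootA : 1 - A ^ (p - 1) + γ * A ^ (q - 1) = 0) :
    1 - (p : ℝ) * a ^ (p - 1) + γ * (q : ℝ) * a ^ (q - 1) < 0 ∧
    0 < 1 - (p : ℝ) * A ^ (p - 1) + γ * (q : ℝ) * A ^ (q - 1) := by
  obtain ⟨m, rfl⟩ : ∃ m, p = m + 2 := ⟨p - 2, by omega⟩
  obtain ⟨r, rfl⟩ : ∃ r, q = m + 2 + (r + 1) := ⟨q - (m + 2) - 1, by omega⟩
  have e1 : m + 2 - 1 = m + 1 := by omega
  have e2 : m + 2 + (r + 1) - 1 = (m + 1) + (r + 1) := by omega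
  rw [e1, e2] at hroota hrootA ⊢
  obtain ⟨c, ⟨hc1, hc2⟩, hc⟩ := exists_hasDerivAt_eq_zero
    (f := fun u : ℝ => 1 - u ^ (m + 1) + γ * u ^ ((m + 1) + (r + 1)))
    (f' := fun u : ℝ => - (((m + 1 : ℕ) : ℝ) * u ^ m)
      + γ * (((m + 1 + (r + 1) : ℕ) : ℝ) * u ^ (m + 1 + r))) haA
    (by fun_prop) (by rw [hroota, hrootA])
    (by
      intro x _
      have h1 := hasDerivAt_pow (m + 1) x
      have h2 := hasDerivAt_pow (m + 1 + (r + 1)) x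
      have := (h1.const_sub 1).add (h2.const_mul γ)
      exact this)
  have hcp : 0 < c := ha.trans hc1
  have hAp : 0 < A := ha.trans haA
  have key : γ * ((m:ℝ) + 1 + (r + 1)) * c ^ (r + 1) = m + 1 := by
    have h : c ^ m * (γ * ((m:ℝ) + 1 + (r + 1)) * c ^ (r + 1) - (m + 1)) = 0 := by
      push_cast at hc
      rw [← hc]
      ring
    have := (mul_eq_zero.mp h).resolve_left (by positivity)
    linarith
  have hca : a ^ (r + 1) < c ^ (r + 1) := pow_lt_pow_left₀ hc1 ha.le (by omega)
  have hcA : c ^ (r + 1) < A ^ (r + 1) := pow_lt_pow_left₀ hc2 hcp.le (by omega)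
  have hg : 0 < γ * ((m:ℝ) + 1 + (r + 1)) := by positivity
  have ka := mul_lt_mul_of_pos_left hca hg
  have kA := mul_lt_mul_of_pos_left hcA hg
  rw [key] at ka kA
  have fa : ∀ u : ℝ, 1 - u ^ (m + 1) + γ * u ^ (m + 1 + (r + 1)) = 0 →
      1 - ((m + 2 : ℕ) : ℝ) * u ^ (m + 1) + γ * ((m + 2 + (r + 1) : ℕ) : ℝ) * u ^ (m + 1 + (r + 1))
      = u ^ (m + 1) * (γ * ((m:ℝ) + 1 + (r + 1)) * u ^ (r + 1) - (m + 1)) := by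
    intro u hu
    push_cast
    linear_combination hu
  rw [fa a hroota, fa A hrootA]
  constructor
  · apply mul_neg_of_pos_of_neg (by positivity)
    linarith
  · apply mul_pos (by positivity)
    linarith

/-- For a code with entries in `{a, A}` and `K` entries equal to `a`, assuming the
quantity `s = K a²/f'(a) + (N−K) A²/f'(A)` is nonzero, with `σ₀ = 1` if `s < 0` and
`σ₀ = 0` if `s > 0`: all roots of the characteristic polynomial of `L̃⁺L̃⁻` are real;
`0` is a simple root; exactly `K − σ₀` roots are negative and exactly
`N − K − (1 − σ₀)` roots are positive, counted with multiplicity. -/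
theorem LplusLminus_spectrum_positive_mixed (p q : ℕ) (hp : 2 ≤ p) (hpq : p < q)
    (γ : ℝ) (hγ0 : 0 < γ) (hγ : γ < gammaCrit p q)
    (a A : ℝ) (ha : 0 < a) (haA : a < A)
    (hroota : 1 - a ^ (p - 1) + γ * a ^ (q - 1) = 0)
    (hrootA : 1 - A ^ (p - 1) + γ * A ^ (q - 1) = 0)
    (N : ℕ) (hN : 1 ≤ N) (ut : Fin N → ℝ) (hut : ∀ n, ut n = a ∨ ut n = A)
    (K : ℕ) (hK : K = (Finset.univ.filter (fun n => ut n = a)).card)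
    (s : ℝ)
    (hs : s = (K : ℝ) * a ^ 2 / (1 - (p : ℝ) * a ^ (p - 1) + γ * (q : ℝ) * a ^ (q - 1))
        + ((N : ℝ) - (K : ℝ)) * A ^ 2
            / (1 - (p : ℝ) * A ^ (p - 1) + γ * (q : ℝ) * A ^ (q - 1)))
    (hs0 : s ≠ 0)
    (σ : ℕ) (hσ : σ = if s < 0 then 1 else 0) :
    (∀ z ∈ ((Lplus N p q γ ut * Lminus N ut).charpoly.map (algebraMap ℝ ℂ)).roots,
      z.im = 0) ∧
    (Lplus N p q γ ut * Lminus N ut).charpoly.rootMultiplicity 0 = 1 ∧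
    (((Lplus N p q γ ut * Lminus N ut).charpoly.roots.filter (fun x => x < 0)).card
      = K - σ) ∧
    (((Lplus N p q γ ut * Lminus N ut).charpoly.roots.filter (fun x => 0 < x)).card
      = N - K - (1 - σ)) := by
  have hAp : 0 < A := ha.trans haA
  obtain ⟨hfa, hfA⟩ := fprime_signs p q hp hpq γ hγ0 a A ha haA hroota hrootA
  set fa := 1 - (p : ℝ) * a ^ (p - 1) + γ * (q : ℝ) * a ^ (q - 1) with hfa_def
  set fA := 1 - (p : ℝ) * A ^ (p - 1) + γ * (q : ℝ) * A ^ (q - 1) with hfA_def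
  have hupos : ∀ i, 0 < ut i := by
    intro i
    rcases hut i with h | h <;> rw [h] <;> assumption
  set d : Fin N → ℝ := fun n => if ut n = a then fa else fA with hd
  have hLp : Lplus N p q γ ut = Matrix.diagonal d := by
    unfold Lplus
    congr 1
    funext n
    rw [abs_of_pos (hupos n), hd]
    rcases hut n with h | h
    · simp [h, hfa_def]
    · simp [h, haA.ne', hfA_def]
  have hd0 : ∀ i, d i ≠ 0 := by
    intro i
    simp only [hd]
    split_ifs
    · exact hfa.ne
    · exact hfA.ne'
  set v : Fin N → ℝ := fun n => ut n / d n with hv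
  have hcardneg : (Finset.univ.filter (fun i => d i < 0)).card = K := by
    rw [hK]
    congr 1
    ext i
    simp only [Finset.mem_filter, Finset.mem_univ, true_and, hd]
    by_cases h : ut i = a
    · simp [h, hfa]
    · simp [h, hfA.le]
  have hKN : K + (Finset.univ.filter (fun n => ¬ ut n = a)).card = N := by
    rw [hK, Finset.card_filter_add_card_filter_not]
    simp
  have hcardpos : (Finset.univ.filter (fun i => 0 < d i)).card = N - K := by
    have : (Finset.univ.filter (fun i => 0 < d i)) = (Finset.univ.filter (fun n => ¬ ut n = a)) := by
      ext i
      simp only [Finset.mem_filter, Finset.mem_univ, true_and, hd]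
      by_cases h : ut i = a
      · simp [h, hfa.le]
      · simp [h, hfA]
    rw [this]
    omega
  have hvs : v ⬝ᵥ ut = s := by
    have h1 : v ⬝ᵥ ut = ∑ i, (if ut i = a then a ^ 2 / fa else A ^ 2 / fA) := by
      apply Finset.sum_congr rfl
      intro i _
      simp only [hv, hd]
      rcases hut i with h | h
      · simp only [h, if_true]; ring
      · simp only [h, haA.ne', if_false]; ring
    rw [h1, Finset.sum_ite, Finset.sum_const, Finset.sum_const, ← hK, hs, nsmul_eq_mul, nsmul_eq_mul]
    have : ((Finset.univ.filter (fun n => ¬ ut n = a)).card : ℝ) = N - K := by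
      have : (K : ℝ) + ((Finset.univ.filter (fun n => ¬ ut n = a)).card : ℝ) = N := by
        exact_mod_cast hKN
      linarith
    rw [this]
    ring
  have hPD := Lminus_posDef N ut v hupos (by rw [hvs]; exact hs0)
  obtain ⟨hsplit, hneg, hpos⟩ := aux_inertia d _ hPD
  rw [hcardneg] at hneg
  rw [hcardpos] at hpos
  have hDv : (Matrix.diagonal d).mulVec v = ut := by
    ext i
    rw [Matrix.mulVec_diagonal]
    simp only [hv]
    have := hd0 i
    field_simp
  have hsum : Matrix.diagonal d * (Lminus N ut + Matrix.vecMulVec v v)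
      = Matrix.diagonal d * Lminus N ut + Matrix.vecMulVec ut v := by
    rw [mul_add, Matrix.mul_vecMulVec, hDv]
  have hchar := aux_charpoly (Matrix.diagonal d * Lminus N ut) ut v
    (by rw [← Matrix.mulVec_mulVec, Lminus_mulVec_self N ut hupos, Matrix.mulVec_zero])
  rw [← hsum, hvs] at hchar
  rw [hLp]
  set χ := (Matrix.diagonal d * Lminus N ut).charpoly with hχ
  set χ' := (Matrix.diagonal d * (Lminus N ut + Matrix.vecMulVec v v)).charpoly with hχ'
  have hχ0 : χ ≠ 0 := (Matrix.charpoly_monic _).ne_zero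
  have hχ'0 : χ' ≠ 0 := (Matrix.charpoly_monic _).ne_zero
  have hroots : χ'.roots + {0} = χ.roots + {s} := by
    have := congrArg Polynomial.roots hchar
    rwa [Polynomial.roots_mul (mul_ne_zero hχ'0 Polynomial.X_ne_zero),
      Polynomial.roots_mul (mul_ne_zero hχ0 (Polynomial.X_sub_C_ne_zero s)),
      Polynomial.roots_X, Polynomial.roots_X_sub_C] at this
  have hsplitχ : χ.Splits := by
    apply Polynomial.Splits.of_dvd (hsplit.mul Polynomial.Splits.X)
      (mul_ne_zero hχ'0 Polynomial.X_ne_zero)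
    rw [hchar]
    exact dvd_mul_right _ _
  have hcard' : χ'.roots.card = N := by
    rw [← hsplit.natDegree_eq_card_roots, hχ', Matrix.charpoly_natDegree_eq_dim, Fintype.card_fin]
  have htri : ∀ m : Multiset ℝ, m.card = (m.filter (fun x => x < 0)).card
      + (m.filter (fun x => 0 < x)).card + m.count 0 := by
    intro m
    induction m using Multiset.induction_on with
    | empty => simp
    | cons x m ih =>
      rcases lt_trichotomy x 0 with h | h | h
      · simp [h, h.le.not_gt, h.ne', ih]
        omega
      · subst h
        simp [ih]
        omega
      · simp [h, h.le.not_gt, h.ne, ih]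
        omega
  have hzero' : χ'.roots.count 0 = 0 := by
    have := htri χ'.roots
    omega
  have hnegs := congrArg (fun m : Multiset ℝ => (m.filter (fun x => x < 0)).card) hroots
  have hposs := congrArg (fun m : Multiset ℝ => (m.filter (fun x => 0 < x)).card) hroots
  have hzs := congrArg (fun m : Multiset ℝ => m.count 0) hroots
  simp only [Multiset.filter_add, Multiset.card_add, Multiset.count_add, hneg, hpos, hzero',
    Multiset.filter_singleton, lt_irrefl, if_false, Multiset.count_singleton_self,
    Multiset.count_singleton, hs0.symm] at hnegs hposs hzs
  refine ⟨?_, ?_, ?_, ?_⟩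
  · intro z hz
    rw [hsplitχ.roots_map, Multiset.mem_map] at hz
    obtain ⟨x, _, rfl⟩ := hz
    simp
  · rw [← Polynomial.count_roots]
    omega
  · rcases lt_or_gt_of_ne hs0 with h | h
    · simp [h] at hnegs hσ
      omega
    · simp [h, h.le.not_gt] at hnegs hσ
      omega
  · rcases lt_or_gt_of_ne hs0 with h | h
    · simp [h, h.le.not_gt] at hposs hσ
      omega
    · simp [h, h.le.not_gt] at hposs hσ
      omega
end

section
/- Let p, q be integers with 2 ≤ p < q, let γ ∈ (0, γ_{p,q}), and let a < A be the two positive roots of g(u) = 1 − u^{p−1} + γ u^{q−1}. Let N ≥ 1 and let ũ ∈ ℝ^N satisfy |ũ_n| ∈ {a, A} for all n and be sign-alternating, i.e., ũ_n ũ_{n+1} < 0 for all n ∈ {1,…,N−1}; set K = #{n : |ũ_n| = a}. Assume the quantity s = ((L̃⁺)⁻¹ũ)·ũ = K a²/f'(a) + (N−K) A²/f'(A) is nonzero, and set σ₀ = 1 if s < 0 and σ₀ = 0 if s > 0. Then all roots of the characteristic polynomial of the matrix product L̃⁺L̃⁻ are real; 0 is a simple root; exactly N − K − (1 − σ₀)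 roots counted with multiplicity are negative; and exactly K − σ₀ roots counted with multiplicity are positive. -/
open Matrix Polynomial in
lemma inertia_le_s15 {ι κ : Type*} [Fintype ι] [Fintype κ] [DecidableEq ι] [DecidableEq κ]
    (T : Matrix ι κ ℝ) (e : ι → ℝ) (l : κ → ℝ)
    (h : Tᵀ * diagonal e * T = diagonal l) :
    (Finset.univ.filter (fun k => 0 < l k)).card ≤
      (Finset.univ.filter (fun i => 0 < e i)).card := by
  by_contra hlt
  push Not at hlt
  let S : Matrix {i // 0 < e i} {k // 0 < l k} ℝ := T.submatrix (fun i => i.1) (fun k => k.1)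
  have hk : LinearMap.ker (Matrix.toLin' S) ≠ ⊥ := by
    apply LinearMap.ker_ne_bot_of_finrank_lt
    simpa [Fintype.card_subtype] using hlt
  obtain ⟨y, hy, hy0⟩ := (Submodule.ne_bot_iff _).mp hk
  let x : κ → ℝ := fun k => if hk : 0 < l k then y ⟨k, hk⟩ else 0
  have hTx : ∀ i, 0 < e i → (T *ᵥ x) i = 0 := by
    intro i hi
    have h1 : (S *ᵥ y) ⟨i, hi⟩ = 0 := by
      have : S *ᵥ y = 0 := by simpa using hy
      rw [this]; rfl
    rw [← h1]
    simp only [mulVec, dotProduct, S, submatrix_apply]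
    rw [← Finset.sum_subset (Finset.filter_subset (fun k => 0 < l k) Finset.univ)]
    · rw [Finset.sum_subtype (p := fun k => 0 < l k) _ (by simp)]
      apply Finset.sum_congr rfl
      intro k _
      simp [x, k.2]
    · intro k _ hk
      have : ¬ 0 < l k := by simpa using hk
      simp only [x, dif_neg this, mul_zero]
  have hq : (T *ᵥ x) ⬝ᵥ (diagonal e *ᵥ (T *ᵥ x)) = x ⬝ᵥ (diagonal l *ᵥ x) := by
    rw [← h, ← mulVec_mulVec, ← mulVec_mulVec, dotProduct_mulVec x Tᵀ, vecMul_transpose]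
  have hl : (T *ᵥ x) ⬝ᵥ (diagonal e *ᵥ (T *ᵥ x)) ≤ 0 := by
    simp only [dotProduct, mulVec_diagonal]
    apply Finset.sum_nonpos
    intro i _
    by_cases hi : 0 < e i
    · rw [hTx i hi]; simp
    · push Not at hi
      nlinarith [mul_nonneg (neg_nonneg.mpr hi) (mul_self_nonneg ((T *ᵥ x) i))]
  have hr : 0 < x ⬝ᵥ (diagonal l *ᵥ x) := by
    simp only [dotProduct, mulVec_diagonal]
    obtain ⟨k, hk⟩ : ∃ k, y k ≠ 0 := by
      by_contra hc
      push Not at hc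
      exact hy0 (funext hc)
    apply Finset.sum_pos'
    · intro j _
      by_cases hj : 0 < l j
      · nlinarith [mul_nonneg hj.le (mul_self_nonneg (x j))]
      · simp [x, hj]
    · refine ⟨k.1, Finset.mem_univ _, ?_⟩
      have : x k.1 = y k := by simp [x, k.2]
      rw [this]
      have := mul_pos k.2 (mul_self_pos.mpr hk)
      nlinarith
  linarith

open Matrix Polynomial in
lemma core_spec (m : ℕ) (d u : Fin (m + 1) → ℝ) (hd : ∀ i, d i ≠ 0)
    (B : Matrix (Fin (m + 1)) (Fin m) ℝ) (hBu : u ᵥ* B = 0)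
    (hker : ∀ x, x ᵥ* B = 0 → ∃ c : ℝ, x = c • u)
    (hinj : ∀ y, B *ᵥ y = 0 → y = 0)
    (s : ℝ) (hs : s = ∑ i, u i * (u i / d i)) (hs0 : s ≠ 0) (L : Matrix (Fin (m+1)) (Fin (m+1)) ℝ)
    (hL : L = - (B * Bᵀ)) :
    ∃ l : Fin m → ℝ, (diagonal d * L).charpoly = X * ∏ i, (X - C (l i)) ∧ (∀ i, l i ≠ 0) ∧
      (Finset.univ.filter (fun k => 0 < l k)).card + (if s < 0 then 1 else 0) =
        (Finset.univ.filter (fun i => d i < 0)).card ∧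
      (Finset.univ.filter (fun k => l k < 0)).card + (if s < 0 then 0 else 1) =
        (Finset.univ.filter (fun i => 0 < d i)).card := by
  set Q : Matrix (Fin m) (Fin m) ℝ := Bᵀ * diagonal (-d) * B with hQ
  have hH : Q.IsHermitian := by
    rw [Matrix.IsHermitian, hQ]
    simp [Matrix.mul_assoc]
  set l := hH.eigenvalues with hl
  set U : Matrix (Fin m) (Fin m) ℝ := hH.eigenvectorUnitary.1 with hU
  have hUQ : Uᵀ * Q * U = diagonal l := by
    have := hH.conjStarAlgAut_star_eigenvectorUnitary
    rw [Unitary.conjStarAlgAut_star_apply] at this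
    simpa [Matrix.star_eq_conjTranspose] using! this
  have hcp : (diagonal d * L).charpoly = X * Q.charpoly := by
    have e1 : diagonal d * L = (diagonal (-d) * B) * Bᵀ := by
      rw [hL, Matrix.mul_assoc, show diagonal (-d) = - diagonal d from (diagonal_neg d).symm,
        Matrix.mul_neg, Matrix.neg_mul]
    rw [e1, charpoly_mul_comm_of_le _ _ (by simp), hQ, Matrix.mul_assoc]
    simp
  have hdetQ : Q.det ≠ 0 := by
    intro h0
    obtain ⟨y, hy0, hy⟩ := exists_mulVec_eq_zero_iff.mpr h0
    apply hy0
    apply hinj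
    have h1 : (diagonal (-d) *ᵥ (B *ᵥ y)) ᵥ* B = 0 := by
      rw [hQ, ← mulVec_mulVec, ← mulVec_mulVec] at hy
      rw [← mulVec_transpose]; exact hy
    obtain ⟨c, hc⟩ := hker _ h1
    have h2 : ∀ i, (B *ᵥ y) i = - c * (u i / d i) := by
      intro i
      have := congrFun hc i
      simp only [mulVec_diagonal, Pi.neg_apply, Pi.smul_apply, smul_eq_mul] at this
      field_simp [hd i]
      linarith
    have h3 : u ⬝ᵥ (B *ᵥ y) = 0 := by
      rw [dotProduct_mulVec, hBu]; simp
    have h4 : c * s = 0 := by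
      rw [hs, Finset.mul_sum, ← neg_eq_zero, ← h3, ← Finset.sum_neg_distrib]
      apply Finset.sum_congr rfl
      intro i _
      rw [h2]; ring
    have hc0 : c = 0 := by simpa [hs0] using h4
    funext i
    rw [h2, hc0]; simp
  have hl0 : ∀ i, l i ≠ 0 := by
    intro i hi
    apply hdetQ
    rw [hH.det_eq_prod_eigenvalues]
    exact Finset.prod_eq_zero (Finset.mem_univ i) (by simpa using! hi)
  let v : Fin (m+1) → ℝ := fun i => u i / d i
  let T : Matrix (Fin (m+1)) (Fin m ⊕ Unit) ℝ := fromCols (B * U) (replicateCol Unit v)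
  have hdv : ∀ w : Fin (m+1) → ℝ, w ᵥ* diagonal (-d) = fun i => - (w i * d i) := by
    intro w; funext i; simp [vecMul_diagonal]
  have hT : Tᵀ * diagonal (-d) * T = diagonal (Sum.elim l (fun _ => -s)) := by
    rw [show Tᵀ = fromRows (B * U)ᵀ (replicateCol Unit v)ᵀ from transpose_fromCols _ _,
      fromRows_mul, fromRows_mul_fromCols]
    have hv : diagonal (-d) * replicateCol Unit v = - replicateCol Unit u := by
      ext i j
      simp only [diagonal_mul, replicateCol_apply, Matrix.neg_apply, Pi.neg_apply, v]
      field_simp [hd i]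
    have hBu' : Bᵀ * replicateCol Unit u = 0 := by
      ext i j
      have := congrFun hBu i
      simpa [Matrix.mul_apply, vecMul, dotProduct, mul_comm] using this
    have h11 : (B * U)ᵀ * diagonal (-d) * (B * U) = diagonal l := by
      rw [← hUQ, hQ, transpose_mul]; simp only [Matrix.mul_assoc]
    have h12 : (B * U)ᵀ * diagonal (-d) * replicateCol Unit v = 0 := by
      rw [Matrix.mul_assoc, hv, transpose_mul, Matrix.mul_assoc, Matrix.mul_neg, hBu']; simp
    have h21 : (replicateCol Unit v)ᵀ * diagonal (-d) * (B * U) = 0 := by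
      have := congrArg Matrix.transpose h12
      simpa [Matrix.mul_assoc] using this
    have h22 : (replicateCol Unit v)ᵀ * diagonal (-d) * replicateCol Unit v
        = diagonal (fun _ => -s) := by
      rw [Matrix.mul_assoc, hv]
      ext i j
      simp [Matrix.mul_apply, hs, v, mul_comm]
    rw [h11, h12, h21, h22, fromBlocks_diagonal]
  have hT' : Tᵀ * diagonal d * T = diagonal (fun k => - Sum.elim l (fun _ => -s) k) := by
    have := congrArg Neg.neg hT
    rw [diagonal_neg] at this
    rw [← this, show diagonal (-d) = - diagonal d from (diagonal_neg d).symm,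
      Matrix.mul_neg, Matrix.neg_mul, neg_neg]
  have i1 := inertia_le_s15 T _ _ hT
  have i2 := inertia_le_s15 T _ _ hT'
  have split : ∀ (P : ℝ → Prop) [DecidablePred P],
      (Finset.univ.filter (fun k : Fin m ⊕ Unit => P (Sum.elim l (fun _ => -s) k))).card =
      (Finset.univ.filter (fun k => P (l k))).card + if P (-s) then 1 else 0 := by
    intro P _
    rw [Finset.card_filter, Fintype.sum_sum_type, Finset.card_filter]
    simp only [Sum.elim_inl, Sum.elim_inr, Finset.univ_unique, Finset.sum_singleton]
    rfl
  have i1' := split (fun t => 0 < t)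
  have i2' := split (fun t => 0 < -t)
  rw [i1'] at i1
  rw [i2'] at i2
  simp only [Pi.neg_apply, neg_pos, neg_neg] at i1 i2
  have c1 : (Finset.univ.filter (fun k => 0 < l k)).card +
      (Finset.univ.filter (fun k => l k < 0)).card = m := by
    have := Finset.card_filter_add_card_filter_not (s := Finset.univ) (fun k => 0 < l k)
    rw [show (Finset.univ.filter (fun k => l k < 0)) = Finset.univ.filter (fun k => ¬ 0 < l k) from ?_]
    · simpa using this
    · ext k; simp only [Finset.mem_filter, Finset.mem_univ, true_and, not_lt]
      exact ⟨le_of_lt, fun h => lt_of_le_of_ne h (hl0 k)⟩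
  have c2 : (Finset.univ.filter (fun k => 0 < d k)).card +
      (Finset.univ.filter (fun k => d k < 0)).card = m + 1 := by
    have := Finset.card_filter_add_card_filter_not (s := Finset.univ) (fun k => 0 < d k)
    rw [show (Finset.univ.filter (fun k => d k < 0)) = Finset.univ.filter (fun k => ¬ 0 < d k) from ?_]
    · simpa using this
    · ext k; simp only [Finset.mem_filter, Finset.mem_univ, true_and, not_lt]
      exact ⟨le_of_lt, fun h => lt_of_le_of_ne h (hd k)⟩
  refine ⟨l, ?_, hl0, ?_, ?_⟩
  · rw [hcp, hH.charpoly_eq]; rfl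
  · rcases lt_or_gt_of_ne hs0 with h | h
    · rw [if_pos h] at *; rw [if_neg h.not_gt] at *; omega
    · rw [if_neg h.not_gt] at *; rw [if_pos h] at *; omega
  · rcases lt_or_gt_of_ne hs0 with h | h
    · rw [if_pos h] at *; rw [if_neg h.not_gt] at *; omega
    · rw [if_neg h.not_gt] at *; rw [if_pos h] at *; omega

open Polynomial in
lemma poly_conc (m : ℕ) (l : Fin m → ℝ) (hl : ∀ i, l i ≠ 0) (P : ℝ[X])
    (hP : P = X * ∏ i, (X - C (l i))) :
    (∀ z ∈ (P.map (algebraMap ℝ ℂ)).roots, z.im = 0) ∧ P.rootMultiplicity 0 = 1 ∧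
    (P.roots.filter (fun x => x < 0)).card = (Finset.univ.filter (fun k => l k < 0)).card ∧
    (P.roots.filter (fun x => 0 < x)).card = (Finset.univ.filter (fun k => 0 < l k)).card := by
  have hprod : (∏ i, (X - C (l i))) ≠ 0 := by
    simp [Finset.prod_ne_zero_iff, X_sub_C_ne_zero]
  have hr : P.roots = 0 ::ₘ (Finset.univ.val.map l) := by
    rw [hP, roots_mul (mul_ne_zero X_ne_zero hprod), roots_X, roots_prod _ _ hprod]
    simp
  refine ⟨?_, ?_, ?_, ?_⟩
  · intro z hz
    have := (mem_roots'.mp hz).2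
    rw [hP, IsRoot.def, eval_map_algebraMap] at this
    simp only [map_mul, aeval_X, map_prod, map_sub, aeval_C, mul_eq_zero, Finset.prod_eq_zero_iff] at this
    rcases this with h | ⟨i, _, h⟩
    · simp [h]
    · rw [sub_eq_zero] at h; simp [h]
  · rw [← count_roots, hr, Multiset.count_cons_self, Multiset.count_eq_zero_of_notMem]
    simpa using hl
  · rw [hr, Multiset.filter_cons_of_neg _ (by simp), Multiset.filter_map, Multiset.card_map]; rfl
  · rw [hr, Multiset.filter_cons_of_neg _ (by simp), Multiset.filter_map, Multiset.card_map]; rfl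

lemma bern (m n : ℕ) (hm : 1 ≤ m) (hmn : m < n) (r : ℝ) (hr : 0 < r) (hr1 : r ≠ 1) :
    (n : ℝ) * (r ^ m - 1) < m * (r ^ n - 1) := by
  have hm0 : (0:ℝ) < m := by exact_mod_cast hm
  have h := one_add_mul_self_lt_rpow_one_add (s := r ^ m - 1) (p := (n:ℝ)/m)
    (by have := pow_pos hr m; linarith)
    (by intro h; exact hr1 ((pow_eq_one_iff_of_nonneg (n := m) hr.le (by omega)).mp (by linarith)))
    ((one_lt_div hm0).mpr (by exact_mod_cast hmn))
  have e : (1 + (r ^ m - 1)) ^ ((n:ℝ)/m) = r ^ n := by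
    rw [add_sub_cancel, ← Real.rpow_natCast r m, ← Real.rpow_mul hr.le, mul_div_cancel₀ _ hm0.ne',
      Real.rpow_natCast]
  rw [e] at h
  have : (n:ℝ) * (r ^ m - 1) = m * ((n:ℝ)/m * (r ^ m - 1)) := by field_simp
  rw [this]
  apply mul_lt_mul_of_pos_left _ hm0
  linarith

/-- If `x, y` are distinct positive roots of `g`, then `f'(x)` has the sign of `x - y`. -/
lemma fprime_sign (p q : ℕ) (hp : 2 ≤ p) (hpq : p < q) (γ : ℝ) (hγ : 0 < γ) (x y : ℝ)
    (hx : 0 < x) (hy : 0 < y) (hxy : y ≠ x)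
    (h1 : 1 - x ^ (p - 1) + γ * x ^ (q - 1) = 0)
    (h2 : 1 - y ^ (p - 1) + γ * y ^ (q - 1) = 0) :
    0 < (1 - (p : ℝ) * x ^ (p - 1) + γ * (q : ℝ) * x ^ (q - 1)) * (x ^ (p-1) - y ^ (p-1)) := by
  obtain ⟨m, rfl⟩ : ∃ m, p = m + 1 := ⟨p - 1, by omega⟩
  obtain ⟨n, rfl⟩ : ∃ n, q = n + 1 := ⟨q - 1, by omega⟩
  simp only [Nat.add_sub_cancel] at *
  have hb := bern m n (by omega) (by omega) (y / x) (div_pos hy hx)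
    (by intro h; exact hxy ((div_eq_one_iff_eq hx.ne').mp h))
  rw [div_pow, div_pow] at hb
  have hxm := pow_pos hx m
  have hxn := pow_pos hx n
  have e1 : γ * y ^ n = γ * x ^ n * (y ^ n / x ^ n) := by field_simp
  have e2 : y ^ m = x ^ m * (y ^ m / x ^ m) := by field_simp
  set Y := y ^ n / x ^ n
  set Z := y ^ m / x ^ m
  rw [e2, e1] at h2
  rw [e2]
  have hG : 0 < γ * x ^ n := by positivity
  push_cast
  set X := x ^ m
  set G := γ * x ^ n with hGd
  have e3 : γ * ((n:ℝ) + 1) * x ^ n = (n + 1) * G := by rw [hGd]; ring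
  rw [e3]
  have hX : X = 1 + G := by linarith
  have e4 : G * (Y - 1) = X * (Z - 1) := by nlinarith
  have := mul_lt_mul_of_pos_left hb hG
  have h5 : 0 < (m:ℝ) * (X * (Z - 1)) - n * G * (Z - 1) := by rw [← e4]; linarith
  have := mul_pos hxm h5
  have e6 : (1 - ((m:ℝ) + 1) * X + (n + 1) * G) = n * G - m * X := by rw [hX]; ring
  rw [e6]
  nlinarith

/-- Weighted incidence matrix of the path. -/
noncomputable def Binc (m : ℕ) (u : Fin (m + 1) → ℝ) : Matrix (Fin (m + 1)) (Fin m) ℝ :=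
  fun i k => (if i = k.castSucc then Real.sqrt (-(u k.castSucc * u k.succ)) / u k.castSucc else 0)
    + (if i = k.succ then -(Real.sqrt (-(u k.castSucc * u k.succ)) / u k.succ) else 0)

lemma sum_castSucc (m : ℕ) (f : Fin m → ℝ) (i : Fin (m + 1)) :
    (∑ k, if i = k.castSucc then f k else 0) = if h : i.1 < m then f ⟨i.1, h⟩ else 0 := by
  split_ifs with h
  · rw [Finset.sum_eq_single ⟨i.1, h⟩]
    · rw [if_pos]; ext; simp
    · intro k _ hk
      rw [if_neg]; intro hik; apply hk; ext; simp [hik]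
    · simp
  · apply Finset.sum_eq_zero
    intro k _
    rw [if_neg]; rintro rfl; exact h (by simp)

lemma sum_succ (m : ℕ) (f : Fin m → ℝ) (i : Fin (m + 1)) :
    (∑ k, if i = k.succ then f k else 0) = if h : 0 < i.1 then f ⟨i.1 - 1, by omega⟩ else 0 := by
  split_ifs with h
  · rw [Finset.sum_eq_single ⟨i.1 - 1, by omega⟩]
    · rw [if_pos]; ext; simp; omega
    · intro k _ hk
      rw [if_neg]; intro hik; apply hk; ext; simp [hik]
    · simp
  · apply Finset.sum_eq_zero
    intro k _
    rw [if_neg]; rintro rfl; exact h (by simp)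

open Matrix in
lemma Binc_mulVec (m : ℕ) (u : Fin (m + 1) → ℝ) (g : Fin m → ℝ) (i : Fin (m + 1)) :
    (∑ k, Binc m u i k * g k) =
      (if h : i.1 < m then Real.sqrt (-(u i * u ⟨i.1 + 1, by omega⟩)) / u i * g ⟨i.1, h⟩ else 0)
      + (if h : 0 < i.1 then -(Real.sqrt (-(u ⟨i.1 - 1, by omega⟩ * u i)) / u i)
          * g ⟨i.1 - 1, by omega⟩ else 0) := by
  simp only [Binc, add_mul, ite_mul, zero_mul, Finset.sum_add_distrib]
  rw [sum_castSucc, sum_succ]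
  congr 1
  split_ifs with h
  · have e : (⟨i.1 - 1 + 1, by omega⟩ : Fin (m+1)) = i := by ext; simp; omega
    simp [e]
  · rfl

open Matrix in
lemma Binc_vecMul (m : ℕ) (u : Fin (m + 1) → ℝ) (x : Fin (m + 1) → ℝ) (k : Fin m) :
    (x ᵥ* Binc m u) k = Real.sqrt (-(u k.castSucc * u k.succ)) *
      (x k.castSucc / u k.castSucc - x k.succ / u k.succ) := by
  simp only [vecMul, dotProduct, Binc, mul_add, mul_ite, mul_zero, Finset.sum_add_distrib,
    Finset.sum_ite_eq', Finset.mem_univ, if_true]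
  ring

open Matrix in
lemma Binc_inj (m : ℕ) (u : Fin (m + 1) → ℝ) (hu : ∀ i, u i ≠ 0)
    (halt : ∀ k : Fin m, u k.castSucc * u k.succ < 0)
    (y : Fin m → ℝ) (hy : Binc m u *ᵥ y = 0) : y = 0 := by
  have key : ∀ j : ℕ, ∀ h : j < m, y ⟨j, h⟩ = 0 := by
    intro j
    induction j with
    | zero =>
      intro h
      have := congrFun hy ⟨0, by omega⟩
      simp only [mulVec, dotProduct] at this
      rw [Binc_mulVec] at this
      have hw := halt ⟨0, h⟩
      have hw' : Real.sqrt (-(u ⟨0, by omega⟩ * u ⟨0 + 1, by omega⟩)) ≠ 0 :=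
        (Real.sqrt_pos.mpr (neg_pos.mpr hw)).ne'
      simp only [h, dif_pos, lt_irrefl, dif_neg, not_false_eq_true, add_zero, Pi.zero_apply] at this
      rcases mul_eq_zero.mp this with h' | h'
      · exact absurd h' (div_ne_zero hw' (hu _))
      · exact h'
    | succ j ih =>
      intro h
      have := congrFun hy ⟨j + 1, by omega⟩
      simp only [mulVec, dotProduct] at this
      rw [Binc_mulVec] at this
      have hw := halt ⟨j + 1, h⟩
      have hw' : Real.sqrt (-(u ⟨j + 1, by omega⟩ * u ⟨j + 1 + 1, by omega⟩)) ≠ 0 :=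
        (Real.sqrt_pos.mpr (neg_pos.mpr hw)).ne'
      have ih' := ih (by omega)
      simp only [h, dif_pos, Nat.succ_pos, Nat.add_sub_cancel, ih', mul_zero, add_zero,
        Pi.zero_apply] at this
      rcases mul_eq_zero.mp this with h' | h'
      · exact absurd h' (div_ne_zero hw' (hu _))
      · exact h'
  funext k
  exact key k.1 k.2

open Matrix in
lemma Binc_ker (m : ℕ) (u : Fin (m + 1) → ℝ) (hu : ∀ i, u i ≠ 0)
    (halt : ∀ k : Fin m, u k.castSucc * u k.succ < 0)
    (x : Fin (m + 1) → ℝ) (hx : x ᵥ* Binc m u = 0) : ∃ c : ℝ, x = c • u := by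
  refine ⟨x 0 / u 0, ?_⟩
  have key : ∀ i, x i / u i = x 0 / u 0 := by
    intro i
    induction i using Fin.induction with
    | zero => rfl
    | succ k ih =>
      have := congrFun hx k
      rw [Binc_vecMul] at this
      rcases mul_eq_zero.mp this with h' | h'
      · exact absurd h' (Real.sqrt_pos.mpr (neg_pos.mpr (halt k))).ne'
      · rw [← ih]; linarith
  funext i
  rw [Pi.smul_apply, smul_eq_mul, ← key i, div_mul_cancel₀ _ (hu i)]

lemma extZ_in (N : ℕ) (u : Fin N → ℝ) (j : ℕ) (h : j < N) (k : ℤ) (hk : k = j) :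
    extZ N u k = u ⟨j, h⟩ := by
  subst hk
  unfold extZ
  rw [dif_pos ⟨by omega, by omega⟩]
  simp

open Matrix in
lemma Lminus_eq (m : ℕ) (u : Fin (m + 1) → ℝ) (hu : ∀ i, u i ≠ 0)
    (halt : ∀ k : Fin m, u k.castSucc * u k.succ < 0) :
    Lminus (m + 1) u = - (Binc m u * (Binc m u)ᵀ) := by
  have sq : ∀ (j : ℕ) (h : j < m), Real.sqrt (-(u ⟨j, by omega⟩ * u ⟨j + 1, by omega⟩)) *
      Real.sqrt (-(u ⟨j, by omega⟩ * u ⟨j + 1, by omega⟩)) =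
      -(u ⟨j, by omega⟩ * u ⟨j + 1, by omega⟩) := by
    intro j h
    have := halt ⟨j, h⟩
    exact Real.mul_self_sqrt (neg_nonneg.mpr this.le)
  -- the entries of `Binc` with explicit indices
  have Bv : ∀ (i k : ℕ) (hi : i < m + 1) (hk : k < m), Binc m u ⟨i, hi⟩ ⟨k, hk⟩ =
      (if i = k then Real.sqrt (-(u ⟨k, by omega⟩ * u ⟨k + 1, by omega⟩)) / u ⟨k, by omega⟩ else 0)
      + (if i = k + 1 then
        -(Real.sqrt (-(u ⟨k, by omega⟩ * u ⟨k + 1, by omega⟩)) / u ⟨k + 1, by omega⟩) else 0) := by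
    intro i k hi hk
    simp [Binc, Fin.ext_iff]
  ext ⟨i, hi⟩ ⟨j, hj⟩
  rw [Matrix.neg_apply, Matrix.mul_apply]
  simp only [transpose_apply]
  rw [Binc_mulVec]
  simp only [Bv, Lminus, Fin.mk.injEq]
  by_cases hij : i = j
  · subst hij
    have hui := hu ⟨i, hi⟩
    have p1 : (if h : i < m then Real.sqrt (-(u ⟨i, hi⟩ * u ⟨i + 1, by omega⟩)) / u ⟨i, hi⟩ *
        ((if i = i then Real.sqrt (-(u ⟨i, hi⟩ * u ⟨i + 1, by omega⟩)) / u ⟨i, hi⟩ else 0) +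
        (if i = i + 1 then
          -(Real.sqrt (-(u ⟨i, hi⟩ * u ⟨i + 1, by omega⟩)) / u ⟨i + 1, by omega⟩) else 0)) else 0)
        = - (extZ (m+1) u ((i:ℤ) + 1) / u ⟨i, hi⟩) := by
      by_cases h : i < m
      · rw [dif_pos h, if_pos rfl, if_neg (by omega)]
        rw [extZ_in (m+1) u (i+1) (by omega) _ (by push_cast; ring), add_zero, div_mul_div_comm,
          sq i h]
        field_simp
      · unfold extZ
        rw [dif_neg h, dif_neg (by omega)]; simp
    have p2 : (if h : 0 < i then -(Real.sqrt (-(u ⟨i - 1, by omega⟩ * u ⟨i, hi⟩)) / u ⟨i, hi⟩) *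
        ((if i = i - 1 then Real.sqrt (-(u ⟨i - 1, by omega⟩ * u ⟨i - 1 + 1, by omega⟩))
            / u ⟨i - 1, by omega⟩ else 0) +
        (if i = i - 1 + 1 then
          -(Real.sqrt (-(u ⟨i - 1, by omega⟩ * u ⟨i - 1 + 1, by omega⟩))
            / u ⟨i - 1 + 1, by omega⟩) else 0)) else 0)
        = - (extZ (m+1) u ((i:ℤ) - 1) / u ⟨i, hi⟩) := by
      rcases Nat.eq_zero_or_pos i with h | h
      · subst h
        unfold extZ
        rw [dif_neg (lt_irrefl _), dif_neg (by omega)]; simp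
      · obtain ⟨t, rfl⟩ : ∃ t, i = t + 1 := ⟨i - 1, by omega⟩
        rw [dif_pos h, extZ_in (m+1) u t (by omega) _ (by push_cast; ring)]
        simp only [Nat.add_sub_cancel, if_true]
        rw [if_neg (by omega), zero_add, neg_mul_neg, div_mul_div_comm, sq t (by omega)]
        field_simp
    rw [if_pos rfl]
    rw [p1, p2]
    ring
  · rw [if_neg hij]
    by_cases h1 : j = i + 1
    · subst h1
      rw [if_pos (by omega), dif_pos (by omega)]
      have : (if h : 0 < i then -(Real.sqrt (-(u ⟨i - 1, by omega⟩ * u ⟨i, hi⟩)) / u ⟨i, hi⟩) *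
        ((if i + 1 = i - 1 then Real.sqrt (-(u ⟨i - 1, by omega⟩ * u ⟨i - 1 + 1, by omega⟩))
            / u ⟨i - 1, by omega⟩ else 0) +
        (if i + 1 = i - 1 + 1 then
          -(Real.sqrt (-(u ⟨i - 1, by omega⟩ * u ⟨i - 1 + 1, by omega⟩))
            / u ⟨i - 1 + 1, by omega⟩) else 0)) else 0) = 0 := by
        split_ifs <;> first | omega | simp
      rw [this, if_neg (by omega), if_pos rfl, zero_add, add_zero, mul_neg, div_mul_div_comm,
        sq i (by omega), neg_div, div_self (mul_ne_zero (hu _) (hu _))]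
      norm_num
    · by_cases h2 : i = j + 1
      · subst h2
        rw [if_pos (by omega)]
        have : (if h : j + 1 < m then
          Real.sqrt (-(u ⟨j + 1, hi⟩ * u ⟨j + 1 + 1, by omega⟩)) / u ⟨j + 1, hi⟩ *
          ((if j = j + 1 then
            Real.sqrt (-(u ⟨j + 1, hi⟩ * u ⟨j + 1 + 1, by omega⟩)) / u ⟨j + 1, hi⟩ else 0) +
          (if j = j + 1 + 1 then -(Real.sqrt (-(u ⟨j + 1, hi⟩ * u ⟨j + 1 + 1, by omega⟩))
            / u ⟨j + 1 + 1, by omega⟩) else 0)) else 0) = 0 := by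
          split_ifs <;> first | omega | simp
        rw [this, dif_pos (by omega)]
        simp only [Nat.add_sub_cancel, if_true]
        rw [if_neg (by omega), zero_add, add_zero, neg_mul, div_mul_div_comm, sq j (by omega),
          mul_comm (u ⟨j + 1, hi⟩), neg_div, div_self (mul_ne_zero (hu _) (hu _))]
        norm_num
      · rw [if_neg (by omega)]
        split_ifs <;> first | omega | simp

/-- For a sign-alternating code with `|ũ_n| ∈ {a, A}` and `K` entries of modulus `a`,
assuming the quantity `s = K a²/f'(a) + (N−K) A²/f'(A)` is nonzero, with `σ₀ = 1` if
`s < 0` and `σ₀ = 0` if `s > 0`: all roots of the characteristic polynomial of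
`L̃⁺L̃⁻` are real; `0` is a simple root; exactly `N − K − (1 − σ₀)` roots are negative
and exactly `K − σ₀` roots are positive, counted with multiplicity. -/
theorem LplusLminus_spectrum_alternating_mixed (p q : ℕ) (hp : 2 ≤ p) (hpq : p < q)
    (γ : ℝ) (hγ0 : 0 < γ) (hγ : γ < gammaCrit p q)
    (a A : ℝ) (ha : 0 < a) (haA : a < A)
    (hroota : 1 - a ^ (p - 1) + γ * a ^ (q - 1) = 0)
    (hrootA : 1 - A ^ (p - 1) + γ * A ^ (q - 1) = 0)
    (N : ℕ) (hN : 1 ≤ N) (ut : Fin N → ℝ)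
    (hut : ∀ n, |ut n| = a ∨ |ut n| = A)
    (halt : ∀ i : ℕ, (h : i + 1 < N) →
      ut ⟨i, Nat.lt_of_succ_lt h⟩ * ut ⟨i + 1, h⟩ < 0)
    (K : ℕ) (hK : K = (Finset.univ.filter (fun n => |ut n| = a)).card)
    (s : ℝ)
    (hs : s = (K : ℝ) * a ^ 2 / (1 - (p : ℝ) * a ^ (p - 1) + γ * (q : ℝ) * a ^ (q - 1))
        + ((N : ℝ) - (K : ℝ)) * A ^ 2
            / (1 - (p : ℝ) * A ^ (p - 1) + γ * (q : ℝ) * A ^ (q - 1)))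
    (hs0 : s ≠ 0)
    (σ : ℕ) (hσ : σ = if s < 0 then 1 else 0) :
    (∀ z ∈ ((Lplus N p q γ ut * Lminus N ut).charpoly.map (algebraMap ℝ ℂ)).roots,
      z.im = 0) ∧
    (Lplus N p q γ ut * Lminus N ut).charpoly.rootMultiplicity 0 = 1 ∧
    (((Lplus N p q γ ut * Lminus N ut).charpoly.roots.filter (fun x => x < 0)).card
      = N - K - (1 - σ)) ∧
    (((Lplus N p q γ ut * Lminus N ut).charpoly.roots.filter (fun x => 0 < x)).card
      = K - σ) := by
  obtain ⟨m, rfl⟩ : ∃ m, N = m + 1 := ⟨N - 1, by omega⟩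
  have hA : 0 < A := ha.trans haA
  have hpow : a ^ (p - 1) < A ^ (p - 1) := pow_lt_pow_left₀ haA ha.le (by omega)
  set fa := 1 - (p : ℝ) * a ^ (p - 1) + γ * (q : ℝ) * a ^ (q - 1) with hfa
  set fA := 1 - (p : ℝ) * A ^ (p - 1) + γ * (q : ℝ) * A ^ (q - 1) with hfA
  have hfa0 : fa < 0 := by
    have := fprime_sign p q hp hpq γ hγ0 a A ha hA haA.ne' hroota hrootA
    rw [← hfa] at this
    exact neg_of_mul_pos_left this (by linarith)
  have hfA0 : 0 < fA := by
    have := fprime_sign p q hp hpq γ hγ0 A a hA ha haA.ne hrootA hroota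
    rw [← hfA] at this
    exact pos_of_mul_pos_left this (by linarith)
  have hu : ∀ i, ut i ≠ 0 := by
    intro i h
    rcases hut i with h' | h' <;> rw [h, abs_zero] at h' <;> linarith
  have halt' : ∀ k : Fin m, ut k.castSucc * ut k.succ < 0 :=
    fun k => halt k.1 (by omega)
  set d : Fin (m + 1) → ℝ := fun n =>
    1 - (p : ℝ) * |ut n| ^ (p - 1) + γ * (q : ℝ) * |ut n| ^ (q - 1) with hd
  have hda : ∀ n, |ut n| = a → d n = fa := by intro n h; simp only [hd, h, hfa]
  have hdA : ∀ n, |ut n| ≠ a → d n = fA ∧ |ut n| = A := by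
    intro n h
    have h' := (hut n).resolve_left h
    exact ⟨by simp only [hd, h', hfA], h'⟩
  have hd0 : ∀ n, d n ≠ 0 := by
    intro n
    by_cases h : |ut n| = a
    · rw [hda n h]; exact hfa0.ne
    · rw [(hdA n h).1]; exact hfA0.ne'
  have cneg : (Finset.univ.filter (fun i => d i < 0)).card = K := by
    rw [hK]; congr 1; ext n
    simp only [Finset.mem_filter, Finset.mem_univ, true_and]
    by_cases h : |ut n| = a
    · simp [hda n h, h, hfa0]
    · simp [(hdA n h).1, h, hfA0.le]
  have hKN : K + (Finset.univ.filter (fun n => ¬ |ut n| = a)).card = m + 1 := by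
    rw [hK, Finset.card_filter_add_card_filter_not]; simp
  have cpos : (Finset.univ.filter (fun i => 0 < d i)).card = m + 1 - K := by
    refine Eq.trans ?_ (Nat.eq_sub_of_add_eq' hKN); congr 1; ext n
    simp only [Finset.mem_filter, Finset.mem_univ, true_and]
    by_cases h : |ut n| = a
    · simp [hda n h, h, hfa0.le]
    · simp [(hdA n h).1, h, hfA0]
  have hs' : s = ∑ i, ut i * (ut i / d i) := by
    rw [← Finset.sum_filter_add_sum_filter_not Finset.univ (fun n => |ut n| = a)]
    have e1 : ∑ i ∈ Finset.univ.filter (fun n => |ut n| = a), ut i * (ut i / d i)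
        = K * (a ^ 2 / fa) := by
      rw [hK, ← nsmul_eq_mul]
      apply Finset.sum_eq_card_nsmul
      intro i hi
      have h : |ut i| = a := by simpa using hi
      rw [hda i h, ← h, sq_abs]; ring
    have e2 : ∑ i ∈ Finset.univ.filter (fun n => ¬ |ut n| = a), ut i * (ut i / d i)
        = ((m + 1 : ℕ) - K : ℝ) * (A ^ 2 / fA) := by
      have : ((m + 1 : ℕ) - K : ℝ) = ((Finset.univ.filter (fun n => ¬ |ut n| = a)).card : ℕ) := by
        have h9 : ((K + (Finset.univ.filter (fun n => ¬ |ut n| = a)).card : ℕ) : ℝ) = ((m + 1 : ℕ) : ℝ) := by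
          exact_mod_cast hKN
        rw [← h9, Nat.cast_add]; ring
      rw [this, ← nsmul_eq_mul]
      apply Finset.sum_eq_card_nsmul
      intro i hi
      have h : ¬ |ut i| = a := by simpa using hi
      obtain ⟨h1, h2⟩ := hdA i h
      rw [h1, ← h2, sq_abs]; ring
    rw [e1, e2, hs]; ring
  obtain ⟨l, hl, hl0, hp1, hp2⟩ := core_spec m d ut hd0 (Binc m ut)
    (by
      funext k
      rw [Binc_vecMul, div_self (hu _), div_self (hu _)]; simp)
    (Binc_ker m ut hu halt') (Binc_inj m ut hu halt') s hs' hs0 _ (Lminus_eq m ut hu halt')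
  obtain ⟨r1, r2, r3, r4⟩ := poly_conc m l hl0 _ hl
  refine ⟨r1, r2, r3.trans ?_, r4.trans ?_⟩
  · rw [cpos] at hp2
    split_ifs at hp2 hσ <;> omega
  · rw [cneg] at hp1
    split_ifs at hp1 hσ <;> omega
end
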